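/- arXiv:1103.4906 — 2 statements merged into one kernel-verified Lean document; each statement's English description precedes it below -/
import Mathlib

section
/- Let (q1,p1,q2,p2) be a rational solution of A5^(2)(α0,α1,α2,α3), let H be its Hamiltonian, and let c ∈ ℂ with c ≠ 0. Then there exists an integer n such that the function t ↦ H(t) − (n·c/4)/(t−c) has no pole at c; that is, H has at most a simple pole at c and its residue there is an integer multiple of c/4. -/
open Filter Topology Polynomial

/-- Evaluation of a rational function with complex coefficients at a point,
using its reduced numerator and denominator. -/
noncomputable def evR (f : RatFunc ℂ) (t : ℂ) : ℂ := f.num.eval t / f.denom.eval t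

/-- A rational function has no pole at `c` if its reduced denominator does not vanish at `c`. -/
def NoPoleAt (f : RatFunc ℂ) (c : ℂ) : Prop := f.denom.eval c ≠ 0

/-- `(q1, p1, q2, p2)` is a rational solution of the Sasano system
`A5^(2)(α0, α1, α2, α3)` (the parameter `α2` does not occur in the equations):
the four differential equations hold at every point `t ∈ ℂ` which is not a pole
of any of `q1, p1, q2, p2`. -/
def IsSasanoSol (a0 a1 a3 : ℂ) (q1 p1 q2 p2 : RatFunc ℂ) : Prop :=
  ∀ t : ℂ, NoPoleAt q1 t → NoPoleAt p1 t → NoPoleAt q2 t → NoPoleAt p2 t →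
    (t * deriv (evR q1) t =
      2 * (evR q1 t) ^ 2 * evR p1 t - (evR q1 t) ^ 2 + (a0 + a1 + a3) * evR q1 t
        - t + 4 * t * evR p2 t + 2 * evR q1 t * evR q2 t * evR p2 t) ∧
    (t * deriv (evR p1) t =
      -2 * evR q1 t * (evR p1 t) ^ 2 + 2 * evR q1 t * evR p1 t
        - (a0 + a1 + a3) * evR p1 t + a0 - 2 * evR p1 t * evR q2 t * evR p2 t) ∧
    (t * deriv (evR q2) t =
      2 * (evR q2 t) ^ 2 * evR p2 t - (evR q2 t) ^ 2 + (a0 + a1 + a3) * evR q2 t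
        - t + 4 * t * evR p1 t + 2 * evR q1 t * evR p1 t * evR q2 t) ∧
    (t * deriv (evR p2) t =
      -2 * evR q2 t * (evR p2 t) ^ 2 + 2 * evR q2 t * evR p2 t
        - (a0 + a1 + a3) * evR p2 t + a1 - 2 * evR q1 t * evR p1 t * evR p2 t)

/-- The Hamiltonian of a solution of the Sasano system, as a rational function. -/
noncomputable def sasanoH (a0 a1 a3 : ℂ) (q1 p1 q2 p2 : RatFunc ℂ) : RatFunc ℂ :=
  q1 ^ 2 * p1 ^ 2 - q1 ^ 2 * p1 + RatFunc.C (a0 + a1 + a3) * q1 * p1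
    - RatFunc.C a0 * q1 - RatFunc.X * p1
  + q2 ^ 2 * p2 ^ 2 - q2 ^ 2 * p2 + RatFunc.C (a0 + a1 + a3) * q2 * p2
    - RatFunc.C a1 * q2 - RatFunc.X * p2
  + 4 * RatFunc.X * p1 * p2 + 2 * q1 * p1 * q2 * p2

/-- Abstract local data: a field with a derivation and a discrete valuation subring. -/
structure Loc (K : Type) [Field K] where
  R : Subring K
  e : R →+* ℂ
  C : ℂ →+* R
  D : K →+ K
  D_mul : ∀ f g, D (f * g) = D f * g + f * D g
  d : R →+ R
  coe_d : ∀ f : R, ((d f : R) : K) = D f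
  dC : ∀ a, d (C a) = 0
  eC : ∀ a, e (C a) = a
  s : R
  s_ne : (s : K) ≠ 0
  ds : d s = 1
  es : e s = 0
  hdiv : ∀ f : R, e f = 0 → ∃ g : R, f = s * g
  hunit : ∀ f : R, e f ≠ 0 → ∃ g : R, f * g = 1
  hpole : ∀ f : K, f ∈ R ∨ ∃ k : ℕ, ∃ g : R, e g ≠ 0 ∧ f * (s : K) ^ (k + 1) = g

namespace Loc

variable {K : Type} [Field K] (L : Loc K)

lemma d_mul (f g : L.R) : L.d (f * g) = L.d f * g + f * L.d g := by
  apply Subtype.ext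
  push_cast [L.coe_d]
  exact L.D_mul _ _

lemma coe2 : ((2 : L.R) : K) = 2 := map_ofNat L.R.subtype 2
lemma coe4 : ((4 : L.R) : K) = 4 := map_ofNat L.R.subtype 4

lemma four_ne (L : Loc K) : (4 : K) ≠ 0 := by
  intro h
  have h5 : (L.C 4 : L.R) = 0 := by
    apply Subtype.ext
    rw [map_ofNat, L.coe4, h]; rfl
  have := congrArg L.e h5
  rw [L.eC, map_zero] at this
  norm_num at this

lemma half_mul : ((L.C (1 / 2) : L.R) : K) * 2 = 1 := by
  have : (L.C (1 / 2) : L.R) * 2 = 1 := by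
    rw [← map_ofNat L.C 2, ← map_mul, ← map_one L.C]; norm_num
  have h3 := congrArg Subtype.val this
  push_cast [L.coe2] at h3
  exact h3

lemma d_one : L.d 1 = 0 := by
  have := L.dC 1
  rwa [map_one] at this

lemma D_s : L.D (L.s : K) = 1 := by
  rw [← L.coe_d, L.ds]; rfl

lemma D_C (a : ℂ) : L.D (L.C a : K) = 0 := by
  rw [← L.coe_d, L.dC]; rfl

lemma D_s_pow (k : ℕ) : L.D ((L.s : K) ^ k) * L.s = k * (L.s : K) ^ k := by
  induction k with
  | zero =>
    have h : L.D (1 : K) = 0 := by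
      have := L.D_C 1
      rwa [map_one] at this
    simp [h]
  | succ k ih =>
    rw [pow_succ, L.D_mul, L.D_s]
    push_cast
    linear_combination (L.s : K) * ih

lemma D_pole {f : K} {k : ℕ} {g : L.R} (h : f * (L.s : K) ^ k = g) :
    L.D f * (L.s : K) ^ (k + 1) = L.s * L.d g - k * g := by
  rw [L.coe_d, ← h, L.D_mul]
  have := L.D_s_pow k
  linear_combination -f * this

lemma D_pole1 {f : K} {g : L.R} (h : f * (L.s : K) = g) :
    L.D f * (L.s : K) ^ 2 = L.s * L.d g - g := by
  have := L.D_pole (k := 1) (f := f) (g := g) (by simpa using h)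
  simpa using this

/-- the coordinate -/
def t (c : ℂ) : L.R := L.s + L.C c

lemma et (c : ℂ) : L.e (L.t c) = c := by simp [t, L.es, L.eC]
lemma dt (c : ℂ) : L.d (L.t c) = 1 := by simp [t, L.ds, L.dC]

lemma cases_one (f : K) : (∃ g : L.R, f * (L.s : K) = g) ∨
    ∃ k : ℕ, ∃ g : L.R, L.e g ≠ 0 ∧ f * (L.s : K) ^ (k + 2) = g := by
  rcases L.hpole f with h | ⟨k, g, hg, h⟩
  · left; exact ⟨⟨f, h⟩ * L.s, rfl⟩
  · cases k with
    | zero => left; exact ⟨g, by simpa using h⟩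
    | succ k => right; exact ⟨k, g, hg, h⟩

/-- The Sasano system in symmetric coordinates. -/
structure Sys (c : ℂ) (A b1 b2 : ℂ) (q1 P1 q2 P2 u1 u2 : K) : Prop where
  eq1 : (L.t c : K) * L.D q1 = q1 ^ 2 + (2 * u1 + L.C A) * q1 + L.t c * P2
  eq2 : (L.t c : K) * L.D q2 = q2 ^ 2 + (2 * u2 + L.C A) * q2 + L.t c * P1
  ep1 : (L.t c : K) * L.D P1 = -(P1 + 1) * (2 * u1 + L.C A) + L.C b1
  ep2 : (L.t c : K) * L.D P2 = -(P2 + 1) * (2 * u2 + L.C A) + L.C b2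
  S1 : q1 * (P1 + 1) + q2 * (P2 + 1) = 4 * (q1 + u1)
  S2 : q1 * (P1 + 1) + q2 * (P2 + 1) = 4 * (q2 + u2)

variable {L}

lemma Sys.symm {c A b1 b2 : ℂ} {q1 P1 q2 P2 u1 u2 : K}
    (h : L.Sys c A b1 b2 q1 P1 q2 P2 u1 u2) : L.Sys c A b2 b1 q2 P2 q1 P1 u2 u1 :=
  ⟨h.eq2, h.eq1, h.ep2, h.ep1, by rw [← h.S2]; ring, by rw [← h.S1]; ring⟩

/-- If `P` has a pole of order `k + 1` then `u` has a simple pole with known residue. -/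
lemma poleU {c A b : ℂ} {P u : K}
    (ep : (L.t c : K) * L.D P = -(P + 1) * (2 * u + L.C A) + L.C b)
    {k : ℕ} {g : L.R} (hg : L.e g ≠ 0) (hP : P * (L.s : K) ^ (k + 1) = g) :
    ∃ v : L.R, u * (L.s : K) = v ∧ L.e v = (k + 1) * c / 2 := by
  have hd := L.D_pole hP
  obtain ⟨h, hh⟩ := L.hunit (g + L.s ^ (k + 1)) (by simpa [L.es] using hg)
  have hhK : ((g : K) + (L.s : K) ^ (k + 1)) * h = 1 := by exact_mod_cast congrArg Subtype.val hh
  have h2 : ((L.C (1 / 2) : L.R) : K) * 2 = 1 := by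
    have : (L.C (1 / 2) : L.R) * 2 = 1 := by
      rw [← map_ofNat L.C 2, ← map_mul, ← map_one L.C]; norm_num
    have h3 := congrArg Subtype.val this
    push_cast [L.coe2] at h3
    exact h3
  set v : L.R := L.C (1 / 2) * (-(L.C A * L.s) + h * (L.C b * L.s ^ (k + 2)
    - L.t c * (L.s * L.d g - (k + 1 : ℕ) * g))) with hv
  refine ⟨v, ?_, ?_⟩
  · rw [hv]
    push_cast
    push_cast at hd
    linear_combination (-u * L.s) * h2 - L.C (1 / 2) * (2 * u * L.s + L.C A * L.s) * hhK
      + L.C (1 / 2) * h * ((L.s : K) ^ (k + 2) * ep - L.t c * hd - (2 * u + L.C A) * L.s * hP)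
  · have e1 := congrArg L.e hh
    simp only [map_mul, map_add, map_pow, L.es, map_one] at e1
    rw [hv]
    simp only [map_mul, map_add, map_sub, map_neg, map_pow, map_natCast, L.es, L.eC, L.et]
    push_cast
    rw [zero_pow (by omega), add_zero] at e1
    rw [zero_pow (by omega)]
    linear_combination (1 / 2 * c * (k + 1)) * e1


lemma poleTwo {c : ℂ} (hc : c ≠ 0) {P : K} {w : L.R} (hw : (L.t c : K) * P * (L.s : K) ^ 2 = w)
    {k : ℕ} {g : L.R} (hg : P * (L.s : K) ^ (k + 3) = g) : L.e g = 0 := by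
  have h : L.t c * g = L.s ^ (k + 1) * w := by
    apply Subtype.ext
    push_cast
    linear_combination (L.s : K) ^ (k + 1) * hw - L.t c * hg
  have h2 := congrArg L.e h
  simp only [map_mul, map_pow, L.es, L.et] at h2
  rw [zero_pow (by omega), zero_mul] at h2
  exact (mul_eq_zero.mp h2).resolve_left hc

/-- Leading form of the Riccati equation. -/
lemma ric {c A : ℂ} {q P u : K} {f v : L.R}
    (eq : (L.t c : K) * L.D q = q ^ 2 + (2 * u + L.C A) * q + L.t c * P)
    (hq : q * (L.s : K) = f) (hu : u * (L.s : K) = v) :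
    (L.t c : K) * P * (L.s : K) ^ 2 =
      ((L.t c * (L.s * L.d f - f) - f * f - (v + v + L.C A * L.s) * f : L.R) : K) := by
  have hd := L.D_pole1 hq
  push_cast
  rw [← hq, ← hu]
  rw [← hq] at hd
  linear_combination (-(L.s : K) ^ 2) * eq + L.t c * hd

lemma ricOrd {c A ε : ℂ} (hε : ε ≠ 0) {q P w : K} {v g : L.R} {n : ℕ}
    (eq : (L.t c : K) * L.D q = L.C ε * q ^ 2 + (2 * w + L.C A) * q + L.t c * P)
    (hw : w * (L.s : K) = v) (hP : P * (L.s : K) ^ n = g) :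
    (∃ f : L.R, q * (L.s : K) = f) ∨
    ∃ m : ℕ, ∃ h : L.R, q * (L.s : K) ^ (m + 2) = h ∧ 2 * m + 4 ≤ n := by
  rcases L.cases_one q with h | ⟨m, h, hh, hq⟩
  · exact Or.inl h
  · right
    refine ⟨m, h, hq, ?_⟩
    by_contra hlt
    obtain ⟨j, hj⟩ : ∃ j, 2 * m + 4 = n + j + 1 := ⟨2 * m + 4 - n - 1, by omega⟩
    have hd := L.D_pole hq
    have hs : (L.s : K) ^ (2 * m + 4) = (L.s : K) ^ n * (L.s : K) ^ (j + 1) := by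
      rw [hj]; ring
    have key : L.t c * (L.s * L.d h - (m + 2 : ℕ) * h) * L.s ^ (m + 1)
        = L.C ε * (h * h) + (v + v + L.C A * L.s) * L.s ^ (m + 1) * h
          + L.t c * g * L.s ^ (j + 1) := by
      apply Subtype.ext
      push_cast [L.coe2]
      push_cast [L.coe2] at hd
      rw [← hw, ← hP]
      rw [← hq] at hd ⊢
      linear_combination (L.s : K) ^ (2 * m + 4) * eq - L.t c * (L.s : K) ^ (m + 1) * hd
        + L.t c * P * hs
    have h2 := congrArg L.e key
    simp only [map_mul, map_add, map_pow, L.es, L.et, L.eC] at h2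
    rw [zero_pow (by omega), zero_pow (by omega)] at h2
    apply hh
    have h3 : ε * (L.e h * L.e h) = 0 := by linear_combination -h2
    rcases mul_eq_zero.mp h3 with h4 | h4
    · exact absurd h4 hε
    · exact mul_self_eq_zero.mp h4

lemma caseA_bound {c A b1 b2 : ℂ} {q1 P1 q2 P2 u1 u2 : K}
    (H : L.Sys c A b1 b2 q1 P1 q2 P2 u1 u2) {v1 v2 : L.R}
    (hv1 : u1 * (L.s : K) = v1) (hv2 : u2 * (L.s : K) = v2) :
    ∃ f1 f2 : L.R, q1 * (L.s : K) = f1 ∧ q2 * (L.s : K) = f2 := by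
  have h12 : q2 = q1 + u1 - u2 := by
    have h4 : (4 : K) * (q2 - (q1 + u1 - u2)) = 0 := by linear_combination H.S1 - H.S2
    have h40 : (4 : K) ≠ 0 := by
      intro h
      have h5 : (L.C 4 : L.R) = 0 := by
        apply Subtype.ext
        rw [map_ofNat, L.coe4, h]; rfl
      have := congrArg L.e h5
      rw [L.eC, map_zero] at this
      norm_num at this
    linear_combination (mul_eq_zero.mp h4).resolve_left h40
  rcases L.cases_one q1 with ⟨f, hf⟩ | ⟨k, g, hg, hq⟩
  · refine ⟨f, f + v1 - v2, hf, ?_⟩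
    push_cast
    rw [h12, ← hv1, ← hv2, ← hf]; ring
  · exfalso
    have hq2 : q2 * (L.s : K) ^ (k + 2) = ((g + L.s ^ (k + 1) * (v1 - v2) : L.R) : K) := by
      push_cast
      rw [h12, ← hv1, ← hv2, ← hq]; ring
    have hd1 := L.D_pole hq
    have hd2 := L.D_pole hq2
    set g2 : L.R := g + L.s ^ (k + 1) * (v1 - v2) with hg2
    set w2 : L.R := L.t c * L.s ^ (k + 1) * (L.s * L.d g - (k + 2 : ℕ) * g) - g * g
      - (v1 + v1 + L.C A * L.s) * L.s ^ (k + 1) * g with hw2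
    set w1 : L.R := L.t c * L.s ^ (k + 1) * (L.s * L.d g2 - (k + 2 : ℕ) * g2) - g2 * g2
      - (v2 + v2 + L.C A * L.s) * L.s ^ (k + 1) * g2 with hw1
    have e2 : (L.t c : K) * P2 * (L.s : K) ^ (2 * k + 4) = w2 := by
      rw [hw2]
      push_cast [L.coe2]
      push_cast [L.coe2] at hd1
      rw [← hv1]
      rw [← hq] at hd1 ⊢
      linear_combination (-(L.s : K) ^ (2 * k + 4)) * H.eq1 + L.t c * (L.s : K) ^ (k + 1) * hd1
    have e1 : (L.t c : K) * P1 * (L.s : K) ^ (2 * k + 4) = w1 := by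
      rw [hw1]
      push_cast [L.coe2]
      push_cast [L.coe2] at hd2
      rw [← hv2]
      rw [← hq2] at hd2 ⊢
      linear_combination (-(L.s : K) ^ (2 * k + 4)) * H.eq2 + L.t c * (L.s : K) ^ (k + 1) * hd2
    have key : g * (w1 + L.t c * L.s ^ (2 * k + 4)) + g2 * (w2 + L.t c * L.s ^ (2 * k + 4))
        = 4 * L.t c * (L.s ^ (2 * k + 4) * g + L.s ^ (3 * k + 5) * v1) := by
      apply Subtype.ext
      push_cast [L.coe4]
      rw [← hv1, ← e1, ← e2, ← hq, ← hq2]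
      linear_combination (L.t c : K) * (L.s : K) ^ (3 * k + 6) * H.S1
    have h2 := congrArg L.e key
    rw [hw1, hw2, hg2] at h2
    simp only [map_mul, map_add, map_sub, map_pow, L.es, L.et, L.eC] at h2
    rw [zero_pow (show k + 1 ≠ 0 by omega), zero_pow (show 2 * k + 4 ≠ 0 by omega),
      zero_pow (show 3 * k + 5 ≠ 0 by omega)] at h2
    have h3 : L.e g ^ 3 = 0 := by linear_combination (-1 / 2) * h2
    exact hg (pow_eq_zero_iff (by norm_num) |>.mp h3)

/-- What we want to know about the leading coefficient of `P1 * P2`. -/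
def Concl (L : Loc K) (c : ℂ) (P1 P2 : K) : Prop :=
  ∃ n : ℤ, ∃ G : L.R, P1 * P2 * (L.s : K) ^ 2 = G ∧ L.e G = -n * c

lemma Concl.symm {c : ℂ} {P1 P2 : K} (h : Concl L c P1 P2) : Concl L c P2 P1 := by
  obtain ⟨n, G, h1, h2⟩ := h
  exact ⟨n, G, by rw [← h1]; ring, h2⟩

lemma caseA21 {c A b1 b2 : ℂ} (hc : c ≠ 0) {q1 P1 q2 P2 u1 u2 : K}
    (H : L.Sys c A b1 b2 q1 P1 q2 P2 u1 u2) {v1 v2 f1 f2 g1 g2 : L.R}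
    (hv1 : u1 * (L.s : K) = v1) (hv2 : u2 * (L.s : K) = v2)
    (hf1 : q1 * (L.s : K) = f1) (hf2 : q2 * (L.s : K) = f2)
    (hg1 : P1 * (L.s : K) ^ 2 = g1) (hg2 : P2 * (L.s : K) = g2)
    (ev1 : L.e v1 = c) (ev2 : L.e v2 = c / 2) (n1 : L.e g1 ≠ 0) (n2 : L.e g2 ≠ 0) : False := by
  have r1 := ric H.eq1 hf1 hv1
  have r2 := ric H.eq2 hf2 hv2
  have R1 : L.t c * L.s * g2 = L.t c * (L.s * L.d f1 - f1) - f1 * f1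
      - (v1 + v1 + L.C A * L.s) * f1 := by
    apply Subtype.ext
    rw [← r1]; push_cast; rw [← hg2]; ring
  have R2 : L.t c * g1 = L.t c * (L.s * L.d f2 - f2) - f2 * f2
      - (v2 + v2 + L.C A * L.s) * f2 := by
    apply Subtype.ext
    rw [← r2]; push_cast; rw [← hg1]; ring
  have S : f1 * (g1 + L.s * L.s) + f2 * (L.s * (g2 + L.s)) = L.C 4 * (L.s * L.s * (f1 + v1)) := by
    apply Subtype.ext
    rw [map_ofNat]; push_cast [L.coe4]
    rw [← hf1, ← hf2, ← hg1, ← hg2, ← hv1]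
    linear_combination (L.s : K) ^ 3 * H.S1
  have S' : L.C 4 * (f1 + v1) = L.C 4 * (f2 + v2) := by
    apply Subtype.ext
    rw [map_ofNat]; push_cast [L.coe4]
    rw [← hf1, ← hf2, ← hv2, ← hv1]
    linear_combination (L.s : K) * (H.S2 - H.S1)
  have E1 := congrArg (fun x => L.e (L.d x)) R1
  have E2 := congrArg L.e R2
  have E3 := congrArg L.e S
  have E4 := congrArg (fun x => L.e (L.d x)) S
  have E5 := congrArg L.e S'
  simp only [map_mul, map_add, map_sub, L.es, L.et, L.eC, L.d_mul, L.ds, L.dC, L.dt, map_one,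
    map_zero, ev1, ev2] at E1 E2 E3 E4 E5
  have x1 : L.e f1 = 0 := by
    have : L.e f1 * L.e g1 = 0 := by linear_combination E3
    exact (mul_eq_zero.mp this).resolve_right n1
  have x2 : L.e f2 = c / 2 := by linear_combination x1 - E5 / 4
  simp only [x1, x2] at E1 E2 E4
  have y1 : L.e g1 = -5 / 4 * c := by
    apply mul_left_cancel₀ hc
    linear_combination E2
  have y2 : L.e g2 = -2 * L.e (L.d f1) := by
    apply mul_left_cancel₀ hc
    linear_combination E1
  rw [y1, y2] at E4
  apply n2
  rw [y2]
  have : c * L.e (L.d f1) = 0 := by linear_combination -4 / 9 * E4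
  rw [(mul_eq_zero.mp this).resolve_left hc]; ring

lemma caseA22 {c A b1 b2 : ℂ} (hc : c ≠ 0) {q1 P1 q2 P2 u1 u2 : K}
    (H : L.Sys c A b1 b2 q1 P1 q2 P2 u1 u2) {v1 v2 f1 f2 g1 g2 : L.R}
    (hv1 : u1 * (L.s : K) = v1) (hv2 : u2 * (L.s : K) = v2)
    (hf1 : q1 * (L.s : K) = f1) (hf2 : q2 * (L.s : K) = f2)
    (hg1 : P1 * (L.s : K) ^ 2 = g1) (hg2 : P2 * (L.s : K) ^ 2 = g2)
    (ev1 : L.e v1 = c) (ev2 : L.e v2 = c) (n1 : L.e g1 ≠ 0) : False := by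
  have r1 := ric H.eq1 hf1 hv1
  have r2 := ric H.eq2 hf2 hv2
  have R1 : L.t c * g2 = L.t c * (L.s * L.d f1 - f1) - f1 * f1
      - (v1 + v1 + L.C A * L.s) * f1 := by
    apply Subtype.ext
    rw [← r1]; push_cast; rw [← hg2]; ring
  have R2 : L.t c * g1 = L.t c * (L.s * L.d f2 - f2) - f2 * f2
      - (v2 + v2 + L.C A * L.s) * f2 := by
    apply Subtype.ext
    rw [← r2]; push_cast; rw [← hg1]; ring
  have S : f1 * (g1 + L.s * L.s) + f2 * (g2 + L.s * L.s) = L.C 4 * (L.s * L.s * (f1 + v1)) := by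
    apply Subtype.ext
    rw [map_ofNat]; push_cast [L.coe4]
    rw [← hf1, ← hf2, ← hg1, ← hg2, ← hv1]
    linear_combination (L.s : K) ^ 3 * H.S1
  have S' : L.C 4 * (f1 + v1) = L.C 4 * (f2 + v2) := by
    apply Subtype.ext
    rw [map_ofNat]; push_cast [L.coe4]
    rw [← hf1, ← hf2, ← hv2, ← hv1]
    linear_combination (L.s : K) * (H.S2 - H.S1)
  have E1 := congrArg L.e R1
  have E2 := congrArg L.e R2
  have E3 := congrArg L.e S
  have E5 := congrArg L.e S'
  simp only [map_mul, map_add, map_sub, L.es, L.et, L.eC, ev1, ev2] at E1 E2 E3 E5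
  have x2 : L.e f2 = L.e f1 := by linear_combination - E5 / 4
  simp only [x2] at E2 E3
  have y1 : L.e g2 = L.e g1 := by
    apply mul_left_cancel₀ hc
    linear_combination E1 - E2
  have : L.e f1 * L.e g1 = 0 := by
    rw [y1] at E3
    linear_combination E3 / 2
  have x1 := (mul_eq_zero.mp this).resolve_right n1
  rw [x1] at E2
  apply n1
  apply mul_left_cancel₀ hc
  linear_combination E2

lemma caseA11 {c A b1 b2 : ℂ} (hc : c ≠ 0) {q1 P1 q2 P2 u1 u2 : K}
    (H : L.Sys c A b1 b2 q1 P1 q2 P2 u1 u2) {v1 v2 f1 f2 g1 g2 : L.R}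
    (hv1 : u1 * (L.s : K) = v1) (hv2 : u2 * (L.s : K) = v2)
    (hf1 : q1 * (L.s : K) = f1) (hf2 : q2 * (L.s : K) = f2)
    (hg1 : P1 * (L.s : K) = g1) (hg2 : P2 * (L.s : K) = g2)
    (ev1 : L.e v1 = c / 2) (ev2 : L.e v2 = c / 2) :
    L.e g1 * L.e g2 = -c := by
  have r1 := ric H.eq1 hf1 hv1
  have r2 := ric H.eq2 hf2 hv2
  have R1 : L.t c * L.s * g2 = L.t c * (L.s * L.d f1 - f1) - f1 * f1
      - (v1 + v1 + L.C A * L.s) * f1 := by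
    apply Subtype.ext
    rw [← r1]; push_cast; rw [← hg2]; ring
  have R2 : L.t c * L.s * g1 = L.t c * (L.s * L.d f2 - f2) - f2 * f2
      - (v2 + v2 + L.C A * L.s) * f2 := by
    apply Subtype.ext
    rw [← r2]; push_cast; rw [← hg1]; ring
  have Q1 : L.t c * (L.s * L.d g1 - g1) = -(g1 + L.s) * (v1 + v1 + L.C A * L.s)
      + L.C b1 * (L.s * L.s) := by
    apply Subtype.ext
    have hd := L.D_pole1 hg1
    push_cast
    rw [← hg1] at hd ⊢
    rw [← hv1]
    linear_combination (-L.t c) * hd + (L.s : K) ^ 2 * H.ep1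
  have Q2 : L.t c * (L.s * L.d g2 - g2) = -(g2 + L.s) * (v2 + v2 + L.C A * L.s)
      + L.C b2 * (L.s * L.s) := by
    apply Subtype.ext
    have hd := L.D_pole1 hg2
    push_cast
    rw [← hg2] at hd ⊢
    rw [← hv2]
    linear_combination (-L.t c) * hd + (L.s : K) ^ 2 * H.ep2
  have S : f1 * (g1 + L.s) + f2 * (g2 + L.s) = L.C 4 * (L.s * (f1 + v1)) := by
    apply Subtype.ext
    rw [map_ofNat]; push_cast [L.coe4]
    rw [← hf1, ← hf2, ← hg1, ← hg2, ← hv1]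
    linear_combination (L.s : K) ^ 2 * H.S1
  have S' : L.C 4 * (f1 + v1) = L.C 4 * (f2 + v2) := by
    apply Subtype.ext
    rw [map_ofNat]; push_cast [L.coe4]
    rw [← hf1, ← hf2, ← hv2, ← hv1]
    linear_combination (L.s : K) * (H.S2 - H.S1)
  have E0 := congrArg L.e R1
  have E1 := congrArg (fun x => L.e (L.d x)) R1
  have E2 := congrArg (fun x => L.e (L.d x)) R2
  have E3 := congrArg L.e S
  have E4 := congrArg (fun x => L.e (L.d x)) S
  have E5 := congrArg L.e S'
  have E6 := congrArg (fun x => L.e (L.d x)) S'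
  have E7 := congrArg (fun x => L.e (L.d x)) Q1
  have E8 := congrArg (fun x => L.e (L.d x)) Q2
  simp only [map_mul, map_add, map_sub, map_neg, L.es, L.et, L.eC, L.d_mul, L.ds, L.dC, L.dt,
    map_one, map_zero, ev1, ev2] at E0 E1 E2 E3 E4 E5 E6 E7 E8
  have x2 : L.e f2 = L.e f1 := by linear_combination - E5 / 4
  have hx : L.e f1 * (L.e f1 + 2 * c) = 0 := by linear_combination E0
  simp only [x2] at E2 E3 E4
  generalize L.e f1 = x at *
  generalize L.e g1 = r1 at *
  generalize L.e g2 = r2 at *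
  generalize L.e (L.d f1) = y1 at *
  generalize L.e (L.d f2) = y2 at *
  generalize L.e (L.d g1) = z1 at *
  generalize L.e (L.d g2) = z2 at *
  generalize L.e (L.d v1) = w1 at *
  generalize L.e (L.d v2) = w2 at *
  rcases mul_eq_zero.mp hx with h0 | h0
  · subst h0
    have a1 : r2 = -y1 := by
      apply mul_left_cancel₀ hc
      linear_combination E1
    have a2 : r1 = -y2 := by
      apply mul_left_cancel₀ hc
      linear_combination E2
    subst a1 a2
    linear_combination -E4 / 2
  · have h0' : x = -2 * c := by linear_combination h0
    subst h0'
    have a1 : r2 = -r1 := by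
      apply mul_left_cancel₀ hc
      linear_combination -E3 / 2
    subst a1
    have a2 : 2 * (w2 - w1) = 4 * r1 := by
      apply mul_left_cancel₀ hc
      linear_combination 2 * (E1 - E2) + c * 3 / 2 * E6
    have h6 : y1 - y2 = w2 - w1 := by linear_combination E6 / 4
    have h78 : (z1 + z2 + 2) * c = r1 * (2 * (w2 - w1)) := by linear_combination E7 + E8
    have a3 : r1 * (2 * (w2 - w1)) = 4 * c := by
      linear_combination (-2 / 3) * (E4 - r1 * h6 + 2 * h78)
    linear_combination -a3 / 4 + r1 / 4 * a2


lemma caseA {c A b1 b2 : ℂ} (hc : c ≠ 0) {q1 P1 q2 P2 u1 u2 : K}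
    (H : L.Sys c A b1 b2 q1 P1 q2 P2 u1 u2) {k1 k2 : ℕ} {g1 g2 : L.R}
    (n1 : L.e g1 ≠ 0) (n2 : L.e g2 ≠ 0)
    (hg1 : P1 * (L.s : K) ^ (k1 + 1) = g1) (hg2 : P2 * (L.s : K) ^ (k2 + 1) = g2) :
    Concl L c P1 P2 := by
  obtain ⟨v1, hv1, ev1⟩ := poleU H.ep1 n1 hg1
  obtain ⟨v2, hv2, ev2⟩ := poleU H.ep2 n2 hg2
  obtain ⟨f1, f2, hf1, hf2⟩ := caseA_bound H hv1 hv2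
  have r1 := ric H.eq1 hf1 hv1
  have r2 := ric H.eq2 hf2 hv2
  rcases k1 with _ | _ | k1
  · rcases k2 with _ | _ | k2
    · refine ⟨1, g1 * g2, ?_, ?_⟩
      · push_cast
        rw [← hg1, ← hg2]; ring
      · have := caseA11 hc H hv1 hv2 hf1 hf2 (by simpa using hg1) (by simpa using hg2)
          (by simpa using ev1) (by simpa using ev2)
        rw [map_mul, this]; simp
    · exact absurd (caseA21 hc H.symm hv2 hv1 hf2 hf1 (by simpa using hg2) (by simpa using hg1)
        (by rw [ev2]; push_cast; ring) (by simpa using ev1) n2 n1) id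
    · exact absurd (poleTwo hc r1 hg2) n2
  · rcases k2 with _ | _ | k2
    · exact absurd (caseA21 hc H hv1 hv2 hf1 hf2 (by simpa using hg1) (by simpa using hg2)
        (by rw [ev1]; push_cast; ring) (by simpa using ev2) n1 n2) id
    · exact absurd (caseA22 hc H hv1 hv2 hf1 hf2 (by simpa using hg1) (by simpa using hg2)
        (by rw [ev1]; push_cast; ring) (by rw [ev2]; push_cast; ring) n1) id
    · exact absurd (poleTwo hc r1 hg2) n2
  · exact absurd (poleTwo hc r2 hg1) n1

lemma u2_eq {c A b1 b2 : ℂ} {q1 P1 q2 P2 u1 u2 : K}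
    (H : L.Sys c A b1 b2 q1 P1 q2 P2 u1 u2) : u2 = q1 + u1 - q2 := by
  have h4 : (4 : K) * (u2 - (q1 + u1 - q2)) = 0 := by linear_combination H.S1 - H.S2
  linear_combination (mul_eq_zero.mp h4).resolve_left L.four_ne

/-- Common part of the case where `P2` is regular: if `q1 s` vanishes at `c`. -/
lemma caseB_q1 {c A b1 b2 : ℂ} (hc : c ≠ 0) {q1 P1 q2 u1 u2 : K} {r : L.R}
    (H : L.Sys c A b1 b2 q1 P1 q2 r u1 u2) {k : ℕ} {f1 v1 : L.R}
    (hf1 : q1 * (L.s : K) = f1) (hv1 : u1 * (L.s : K) = v1)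
    (ev1 : L.e v1 = (k + 1) * c / 2) (ef1 : L.e f1 = 0) :
    ∃ h : L.R, q1 = h ∧ L.e h = 0 ∧ L.e r = - k * L.e (L.d h) := by
  obtain ⟨h, hh⟩ := L.hdiv f1 ef1
  have hq : q1 = h := by
    have : q1 * (L.s : K) = h * L.s := by
      rw [hf1, hh]; push_cast; ring
    exact mul_right_cancel₀ L.s_ne this
  have R : L.t c * (L.s * L.d h) = L.s * (h * h) + (v1 + v1 + L.C A * L.s) * h
      + L.t c * (L.s * r) := by
    apply Subtype.ext
    push_cast
    rw [L.coe_d, ← hq, ← hv1]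
    linear_combination (L.s : K) * H.eq1
  have E0 := congrArg L.e R
  have E1 := congrArg (fun x => L.e (L.d x)) R
  simp only [map_mul, map_add, map_sub, map_neg, L.es, L.et, L.eC, L.d_mul, L.ds, L.dC, L.dt,
    map_one, map_zero, ev1] at E0 E1
  have h0 : L.e h = 0 := by
    have h1 : ((k + 1 : ℕ) : ℂ) * (c * L.e h) = 0 := by
      push_cast
      linear_combination -E0
    have h2 := (mul_eq_zero.mp h1).resolve_left (by exact_mod_cast Nat.succ_ne_zero k)
    exact (mul_eq_zero.mp h2).resolve_left hc
  refine ⟨h, hq, h0, ?_⟩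
  rw [h0] at E1
  apply mul_left_cancel₀ hc
  linear_combination -E1

lemma caseB2 {c A b1 b2 : ℂ} (hc : c ≠ 0) {q1 P1 q2 u1 u2 : K} {r : L.R}
    (H : L.Sys c A b1 b2 q1 P1 q2 r u1 u2) {g : L.R}
    (n1 : L.e g ≠ 0) (hg : P1 * (L.s : K) ^ 2 = g) : Concl L c P1 r := by
  obtain ⟨v1, hv1, ev1⟩ := poleU (k := 1) H.ep1 n1 hg
  have hu2 := u2_eq H
  obtain ⟨f1, hf1⟩ : ∃ f : L.R, q1 * (L.s : K) = f := by
    rcases ricOrd (ε := 1) (n := 0) (g := r) (w := u1) (A := A) (c := c) (q := q1) (P := r) one_ne_zero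
      (by rw [H.eq1, map_one]; push_cast; ring) hv1 (by simp) with h | ⟨m, h, _, h2⟩
    · exact h
    · omega
  obtain ⟨f2, hf2⟩ : ∃ f : L.R, q2 * (L.s : K) = f := by
    rcases ricOrd (ε := -1) (n := 2) (g := g) (w := q1 + u1) (v := f1 + v1) (A := A) (c := c)
      (q := q2) (P := P1) (by norm_num)
      (by rw [H.eq2, map_neg, map_one, hu2]; push_cast; ring)
      (by push_cast; rw [← hf1, ← hv1]; ring) hg with h | ⟨m, h, _, h2⟩
    · exact h
    · omega
  have S0 : f1 * (g + L.s * L.s) + L.s * L.s * (f2 * (r + 1))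
      = L.C 4 * (L.s * L.s * (f1 + v1)) := by
    apply Subtype.ext
    rw [map_ofNat]; push_cast [L.coe4]
    rw [← hf1, ← hf2, ← hg, ← hv1]
    linear_combination (L.s : K) ^ 3 * H.S1
  have E0 := congrArg L.e S0
  simp only [map_mul, map_add, L.es, L.eC] at E0
  have ef1 : L.e f1 = 0 := by
    have : L.e f1 * L.e g = 0 := by linear_combination E0
    exact (mul_eq_zero.mp this).resolve_right n1
  obtain ⟨h, hq, h0, hr⟩ := caseB_q1 hc H hf1 hv1 ev1 ef1
  have hv2 : u2 * (L.s : K) = ((L.s * h + v1 - f2 : L.R) : K) := by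
    push_cast
    rw [hu2, ← hv1, ← hf2, ← hq]; ring
  have S : h * (g + L.s * L.s) + L.s * (f2 * (r + 1)) = L.C 4 * (L.s * (L.s * h + v1)) := by
    apply Subtype.ext
    rw [map_ofNat]; push_cast [L.coe4]
    rw [← hf2, ← hg, ← hv1, ← hq]
    linear_combination (L.s : K) ^ 2 * H.S1
  have Q : L.t c * (L.s * L.d r) = -(r + 1) * ((L.s * h + v1 - f2) + (L.s * h + v1 - f2)
      + L.C A * L.s) + L.C b2 * L.s := by
    apply Subtype.ext
    push_cast at hv2
    push_cast
    rw [L.coe_d, ← hv2]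
    linear_combination (L.s : K) * H.ep2
  have r2 := ric H.eq2 hf2 hv2
  have R2 : L.t c * g = L.t c * (L.s * L.d f2 - f2) - f2 * f2
      - ((L.s * h + v1 - f2) + (L.s * h + v1 - f2) + L.C A * L.s) * f2 := by
    apply Subtype.ext
    rw [← r2]; push_cast; rw [← hg]; ring
  have E1 := congrArg (fun x => L.e (L.d x)) S
  have E2 := congrArg L.e Q
  have E3 := congrArg L.e R2
  simp only [map_mul, map_add, map_sub, map_neg, L.es, L.et, L.eC, L.d_mul, L.ds, L.dC, L.dt,
    map_one, map_zero, ev1, h0, L.d_one] at E1 E2 E3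
  have hG : P1 * r * (L.s : K) ^ 2 = ((g * r : L.R) : K) := by
    push_cast; rw [← hg]; ring
  have e2 : (L.e r + 1) * (c - L.e f2) = 0 := by
    push_cast at E2
    linear_combination E2 / 2
  push_cast at E1 E3 hr
  rcases mul_eq_zero.mp e2 with h5 | h5
  · refine ⟨4, g * r, hG, ?_⟩
    rw [map_mul]
    have h6 : L.e r = -1 := by linear_combination h5
    have h7 : L.e (L.d h) = 1 := by linear_combination hr - h6
    rw [h6, h7] at E1
    rw [h6]
    push_cast
    linear_combination -E1
  · refine ⟨2, g * r, hG, ?_⟩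
    rw [map_mul]
    have h6 : L.e f2 = c := by linear_combination -h5
    have h7 : L.e (L.d h) = - L.e r := by linear_combination hr
    rw [h6] at E1 E3
    have h8 : L.e g = -2 * c := by
      apply mul_left_cancel₀ hc
      linear_combination E3
    rw [h7, h8] at E1
    have h9 : L.e r = 1 := by
      apply mul_left_cancel₀ hc
      linear_combination E1 / 3
    rw [h8, h9]; push_cast; ring

lemma caseB3 {c A b1 b2 : ℂ} (hc : c ≠ 0) {q1 P1 q2 u1 u2 : K} {r : L.R}
    (H : L.Sys c A b1 b2 q1 P1 q2 r u1 u2) {j : ℕ} {g : L.R}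
    (n1 : L.e g ≠ 0) (hg : P1 * (L.s : K) ^ (j + 3) = g) : False := by
  obtain ⟨v1, hv1, ev1⟩ := poleU (k := j + 2) H.ep1 n1 hg
  have hu2 := u2_eq H
  obtain ⟨f1, hf1⟩ : ∃ f : L.R, q1 * (L.s : K) = f := by
    rcases ricOrd (ε := 1) (n := 0) (g := r) (w := u1) (A := A) (c := c) (q := q1) (P := r) one_ne_zero
      (by rw [H.eq1, map_one]; push_cast; ring) hv1 (by simp) with h | ⟨m, h, _, h2⟩
    · exact h
    · omega
  obtain ⟨f2, hf2⟩ : ∃ f : L.R, q2 * (L.s : K) ^ (j + 1) = f := by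
    rcases ricOrd (ε := -1) (n := j + 3) (g := g) (w := q1 + u1) (v := f1 + v1) (A := A) (c := c)
      (q := q2) (P := P1) (by norm_num)
      (by rw [H.eq2, map_neg, map_one, hu2]; push_cast; ring)
      (by push_cast; rw [← hf1, ← hv1]; ring) hg with ⟨f, h⟩ | ⟨m, f, h, h2⟩
    · exact ⟨f * L.s ^ j, by push_cast; rw [← h]; ring⟩
    · obtain ⟨i, rfl⟩ : ∃ i, j = m + 1 + i := ⟨j - (m + 1), by omega⟩
      exact ⟨f * L.s ^ i, by push_cast; rw [← h]; ring⟩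
  have S0 : f1 * (g + L.s * L.s ^ (j + 2)) + L.s * (L.s * L.s * f2 * (r + 1))
      = L.C 4 * (L.s * L.s ^ (j + 2) * (f1 + v1)) := by
    apply Subtype.ext
    rw [map_ofNat]; push_cast [L.coe4]
    rw [← hf1, ← hf2, ← hg, ← hv1]
    linear_combination (L.s : K) ^ (j + 4) * H.S1
  have E0 := congrArg L.e S0
  simp only [map_mul, map_add, L.es, L.eC] at E0
  have ef1 : L.e f1 = 0 := by
    have : L.e f1 * L.e g = 0 := by linear_combination E0
    exact (mul_eq_zero.mp this).resolve_right n1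
  obtain ⟨h, hq, h0, hr⟩ := caseB_q1 hc H hf1 hv1 ev1 ef1
  have S : h * (g + L.s * L.s ^ (j + 2)) + L.s * (L.s * (f2 * (r + 1)))
      = L.C 4 * (L.s * (L.s * (L.s ^ j * (L.s * h + v1)))) := by
    apply Subtype.ext
    rw [map_ofNat]; push_cast [L.coe4]
    rw [← hf2, ← hg, ← hv1, ← hq]
    linear_combination (L.s : K) ^ (j + 3) * H.S1
  have E1 := congrArg (fun x => L.e (L.d x)) S
  simp only [map_mul, map_add, map_sub, map_neg, L.es, L.et, L.eC, L.d_mul, L.ds, L.dC, L.dt,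
    map_one, map_zero, h0] at E1
  have dh : L.e (L.d h) = 0 := by
    have : L.e (L.d h) * L.e g = 0 := by linear_combination E1
    exact (mul_eq_zero.mp this).resolve_right n1
  rw [dh, mul_zero] at hr
  obtain ⟨i, hi⟩ := L.hunit (r + 1) (by rw [map_add, hr, map_one]; norm_num)
  have hiK : ((r : K) + 1) * i = 1 := by exact_mod_cast congrArg Subtype.val hi
  have hy : (2 * u2 : K) = ((i * (L.C b2 - L.t c * L.d r) - L.C A : L.R) : K) := by
    push_cast
    rw [L.coe_d]
    linear_combination (-(2 * u2 + L.C A)) * hiK + i * H.ep2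
  set y : L.R := i * (L.C b2 - L.t c * L.d r) - L.C A with hy'
  have hh := L.half_mul
  have hu : u2 = ((L.C (1 / 2) * y : L.R) : K) := by
    push_cast
    rw [← hy]
    linear_combination -u2 * hh
  have hf : q2 * (L.s : K) = ((L.s * h + v1 - L.C (1 / 2) * y * L.s : L.R) : K) := by
    have hu' := hu
    push_cast at hu' ⊢
    rw [← hu', ← hv1, ← hq]
    linear_combination (L.s : K) * hu2
  have r2 := ric H.eq2 hf (v := L.C (1 / 2) * y * L.s) (by rw [hu]; push_cast; ring)
  exact n1 (poleTwo hc r2 hg)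

theorem concl {c A b1 b2 : ℂ} (hc : c ≠ 0) {q1 P1 q2 P2 u1 u2 : K}
    (H : L.Sys c A b1 b2 q1 P1 q2 P2 u1 u2) : Concl L c P1 P2 := by
  have aux : ∀ {b1 b2 : ℂ} {q1 P1 q2 P2 u1 u2 : K}, L.Sys c A b1 b2 q1 P1 q2 P2 u1 u2 →
      P2 ∈ L.R → ∀ (k : ℕ) (g : L.R), L.e g ≠ 0 → P1 * (L.s : K) ^ (k + 1) = g →
      Concl L c P1 P2 := by
    intro b1 b2 q1 P1 q2 P2 u1 u2 H hP2 k g ng hg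
    obtain ⟨r, rfl⟩ : ∃ r : L.R, P2 = r := ⟨⟨P2, hP2⟩, rfl⟩
    rcases k with _ | _ | k
    · refine ⟨0, L.s * g * r, ?_, by simp [L.es]⟩
      push_cast; rw [← hg]; ring
    · exact caseB2 hc H ng hg
    · exact absurd (caseB3 hc H ng hg) id
  rcases L.hpole P1 with h1 | ⟨k1, g1, n1, hg1⟩
  · rcases L.hpole P2 with h2 | ⟨k2, g2, n2, hg2⟩
    · exact ⟨0, ⟨P1, h1⟩ * ⟨P2, h2⟩ * L.s ^ 2, by push_cast; rfl, by simp [L.es]⟩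
    · exact (aux H.symm h1 k2 g2 n2 hg2).symm
  · rcases L.hpole P2 with h2 | ⟨k2, g2, n2, hg2⟩
    · exact aux H h2 k1 g1 n1 hg1
    · exact caseA hc H n1 n2 hg1 hg2

/-- Integration: control of `DF` with `DF * s` regular forces `F` regular. -/
lemma regular_of_D {F : K} {w : L.R} (h : L.D F * (L.s : K) = w) : F ∈ L.R := by
  rcases L.hpole F with h1 | ⟨k, g, ng, hg⟩
  · exact h1
  · exfalso
    have hd := L.D_pole hg
    have : L.s ^ (k + 1) * w = L.s * L.d g - (k + 1 : ℕ) * g := by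
      apply Subtype.ext
      push_cast at hd ⊢
      rw [← hd, ← h]; ring
    have E := congrArg L.e this
    simp only [map_mul, map_sub, map_pow, L.es, map_natCast] at E
    rw [zero_pow (by omega)] at E
    have h2 : ((k + 1 : ℕ) : ℂ) * L.e g = 0 := by linear_combination E
    rcases mul_eq_zero.mp h2 with h3 | h3
    · exact absurd h3 (by exact_mod_cast Nat.succ_ne_zero k)
    · exact ng h3

end Loc


lemma evR_div (a b : ℂ[X]) (t : ℂ) (hb : b.eval t ≠ 0) :
    evR (algebraMap _ _ a / algebraMap _ _ b) t = a.eval t / b.eval t := by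
  have hb0 : b ≠ 0 := by rintro rfl; simp at hb
  set f : RatFunc ℂ := algebraMap _ _ a / algebraMap _ _ b with hf
  have h1 : f.num * b = a * f.denom := (RatFunc.num_mul_eq_mul_denom_iff hb0).mpr hf
  have h2 : f.denom.eval t ≠ 0 := by
    intro h
    obtain ⟨x, hx⟩ := RatFunc.denom_div_dvd a b
    apply hb
    rw [hx, Polynomial.eval_mul, ← hf, h, zero_mul]
  have h3 := congrArg (Polynomial.eval t) h1
  rw [Polynomial.eval_mul, Polynomial.eval_mul] at h3
  unfold evR
  rw [div_eq_div_iff h2 hb, h3]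

lemma noPole_iff (f : RatFunc ℂ) (c : ℂ) : NoPoleAt f c ↔
    ∃ a b : ℂ[X], b.eval c ≠ 0 ∧ f = algebraMap _ _ a / algebraMap _ _ b := by
  constructor
  · intro h
    exact ⟨f.num, f.denom, h, (RatFunc.num_div_denom f).symm⟩
  · rintro ⟨a, b, hb, rfl⟩ h
    obtain ⟨x, hx⟩ := RatFunc.denom_div_dvd a b
    apply hb
    rw [hx, Polynomial.eval_mul, h, zero_mul]

lemma alg_ne {b : ℂ[X]} (hb : b ≠ 0) : (algebraMap ℂ[X] (RatFunc ℂ) b) ≠ 0 :=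
  RatFunc.algebraMap_ne_zero hb

lemma ne_of_eval {b : ℂ[X]} {c : ℂ} (hb : b.eval c ≠ 0) : b ≠ 0 := by
  rintro rfl; simp at hb

/-- Derivative of a rational function. -/
noncomputable def rD (f : RatFunc ℂ) : RatFunc ℂ :=
  algebraMap _ _ (f.num.derivative * f.denom - f.num * f.denom.derivative) /
    algebraMap _ _ (f.denom ^ 2)

lemma rD_aux (a b n d aD bD nD dD : ℂ[X]) (h1 : n * b = a * d)
    (h2 : nD * b + n * bD = aD * d + a * dD) :
    (nD * d - n * dD) * b ^ 2 = (aD * b - a * bD) * d ^ 2 := by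
  linear_combination b * d * h2 - (b * dD + d * bD) * h1

lemma rD_div (a b : ℂ[X]) (hb : b ≠ 0) :
    rD (algebraMap _ _ a / algebraMap _ _ b) =
      algebraMap _ _ (a.derivative * b - a * b.derivative) / algebraMap _ _ (b ^ 2) := by
  obtain ⟨f, hf⟩ : ∃ f : RatFunc ℂ, f = algebraMap _ _ a / algebraMap _ _ b := ⟨_, rfl⟩
  rw [← hf]
  have h1 : f.num * b = a * f.denom := (RatFunc.num_mul_eq_mul_denom_iff hb).mpr hf
  have h2 := congrArg Polynomial.derivative h1
  rw [Polynomial.derivative_mul, Polynomial.derivative_mul] at h2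
  have hd := RatFunc.denom_ne_zero f
  unfold rD
  rw [div_eq_div_iff (alg_ne (pow_ne_zero _ hd)) (alg_ne (pow_ne_zero _ hb)), ← map_mul, ← map_mul]
  exact congrArg _ (rD_aux _ _ _ _ _ _ _ _ h1 h2)

lemma exists_div (f : RatFunc ℂ) : ∃ a b : ℂ[X], b ≠ 0 ∧
    f = algebraMap _ _ a / algebraMap _ _ b :=
  ⟨f.num, f.denom, RatFunc.denom_ne_zero f, (RatFunc.num_div_denom f).symm⟩

lemma rD_add (f g : RatFunc ℂ) : rD (f + g) = rD f + rD g := by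
  obtain ⟨a, b, hb, rfl⟩ := exists_div f
  obtain ⟨x, y, hy, rfl⟩ := exists_div g
  have hb' := alg_ne hb
  have hy' := alg_ne hy
  rw [div_add_div _ _ hb' hy', ← map_mul, ← map_mul, ← map_mul, ← map_add,
    rD_div _ _ (mul_ne_zero hb hy), rD_div _ _ hb, rD_div _ _ hy]
  simp only [Polynomial.derivative_mul, Polynomial.derivative_add, map_add, map_sub, map_mul,
    map_pow]
  field_simp
  ring

lemma rD_mul (f g : RatFunc ℂ) : rD (f * g) = rD f * g + f * rD g := by
  obtain ⟨a, b, hb, rfl⟩ := exists_div f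
  obtain ⟨x, y, hy, rfl⟩ := exists_div g
  have hb' := alg_ne hb
  have hy' := alg_ne hy
  rw [div_mul_div_comm, ← map_mul, ← map_mul,
    rD_div _ _ (mul_ne_zero hb hy), rD_div _ _ hb, rD_div _ _ hy]
  simp only [Polynomial.derivative_mul, Polynomial.derivative_add, map_add, map_sub, map_mul,
    map_pow]
  field_simp
  ring

lemma rD_poly (a : ℂ[X]) : rD (algebraMap _ _ a) = algebraMap _ _ a.derivative := by
  have := rD_div a 1 one_ne_zero
  simpa using this

lemma deriv_evR (f : RatFunc ℂ) (t : ℂ) (h : NoPoleAt f t) :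
    deriv (evR f) t = evR (rD f) t := by
  have h' : f.denom.eval t ≠ 0 := h
  unfold rD
  rw [evR_div _ _ _ (by simpa using h')]
  have := (f.num.hasDerivAt t).div (f.denom.hasDerivAt t) h'
  have h2 := this.deriv
  have h3 : evR f = (fun x => f.num.eval x) / (fun x => f.denom.eval x) := by
    funext x; rfl
  rw [h3]
  rw [h2]
  simp

/-- Rational functions regular at `c`. -/
noncomputable def regR (c : ℂ) : Subring (RatFunc ℂ) where
  carrier := {f | NoPoleAt f c}
  mul_mem' := by
    intro f g hf hg
    obtain ⟨a, b, hb, rfl⟩ := (noPole_iff _ _).mp hf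
    obtain ⟨x, y, hy, rfl⟩ := (noPole_iff _ _).mp hg
    exact (noPole_iff _ _).mpr ⟨a * x, b * y, by simpa using ⟨hb, hy⟩, by
      rw [div_mul_div_comm, map_mul, map_mul]⟩
  one_mem' := (noPole_iff _ _).mpr ⟨1, 1, by simp, by simp⟩
  add_mem' := by
    intro f g hf hg
    obtain ⟨a, b, hb, rfl⟩ := (noPole_iff _ _).mp hf
    obtain ⟨x, y, hy, rfl⟩ := (noPole_iff _ _).mp hg
    exact (noPole_iff _ _).mpr ⟨a * y + b * x, b * y, by simpa using ⟨hb, hy⟩, by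
      rw [div_add_div _ _ (alg_ne (ne_of_eval hb)) (alg_ne (ne_of_eval hy))]
      simp only [map_mul, map_add]⟩
  zero_mem' := (noPole_iff _ _).mpr ⟨0, 1, by simp, by simp⟩
  neg_mem' := by
    intro f hf
    obtain ⟨a, b, hb, rfl⟩ := (noPole_iff _ _).mp hf
    exact (noPole_iff _ _).mpr ⟨-a, b, hb, by
      rw [map_neg]; exact (neg_div _ _).symm⟩

lemma mem_regR {f : RatFunc ℂ} {c : ℂ} : f ∈ regR c ↔ NoPoleAt f c := Iff.rfl

/-- Evaluation at `c` as a ring homomorphism. -/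
noncomputable def evHom (c : ℂ) : regR c →+* ℂ where
  toFun f := evR f c
  map_one' := by
    have := evR_div 1 1 c (by simp)
    simpa using this
  map_zero' := by
    have := evR_div 0 1 c (by simp)
    simpa using this
  map_mul' := by
    rintro ⟨f, hf⟩ ⟨g, hg⟩
    obtain ⟨a, b, hb, rfl⟩ := (noPole_iff _ _).mp hf
    obtain ⟨x, y, hy, rfl⟩ := (noPole_iff _ _).mp hg
    change evR (_ * _) c = evR _ c * evR _ c
    rw [div_mul_div_comm, ← map_mul, ← map_mul, evR_div _ _ _ hb, evR_div _ _ _ hy,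
      evR_div _ _ _ (by simpa using ⟨hb, hy⟩), Polynomial.eval_mul, Polynomial.eval_mul,
      div_mul_div_comm]
  map_add' := by
    rintro ⟨f, hf⟩ ⟨g, hg⟩
    obtain ⟨a, b, hb, rfl⟩ := (noPole_iff _ _).mp hf
    obtain ⟨x, y, hy, rfl⟩ := (noPole_iff _ _).mp hg
    change evR (_ + _) c = evR _ c + evR _ c
    rw [div_add_div _ _ (alg_ne (ne_of_eval hb)) (alg_ne (ne_of_eval hy)), ← map_mul, ← map_mul,
      ← map_mul, ← map_add, evR_div _ _ _ hb, evR_div _ _ _ hy,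
      evR_div _ _ _ (by simpa using ⟨hb, hy⟩), div_add_div _ _ hb hy]
    simp only [Polynomial.eval_mul, Polynomial.eval_add]

lemma poly_mem (a : ℂ[X]) (c : ℂ) : algebraMap ℂ[X] (RatFunc ℂ) a ∈ regR c :=
  (noPole_iff _ _).mpr ⟨a, 1, by simp, by simp⟩

lemma evR_poly (a : ℂ[X]) (c : ℂ) : evR (algebraMap _ _ a) c = a.eval c := by
  have := evR_div a 1 c (by simp)
  simpa using this

lemma rD_mem {f : RatFunc ℂ} {c : ℂ} (h : f ∈ regR c) : rD f ∈ regR c := by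
  obtain ⟨a, b, hb, rfl⟩ := (noPole_iff _ _).mp h
  rw [rD_div _ _ (ne_of_eval hb)]
  exact (noPole_iff _ _).mpr ⟨_, _, by simpa using hb, rfl⟩

noncomputable def rDHom : RatFunc ℂ →+ RatFunc ℂ := AddMonoidHom.mk' rD rD_add

/-- The local data at `c`. -/
noncomputable def ratLoc (c : ℂ) : Loc (RatFunc ℂ) where
  R := regR c
  e := evHom c
  C := (RatFunc.C).codRestrict (regR c) (fun a => by
    rw [← RatFunc.algebraMap_C]; exact poly_mem _ _)
  D := rDHom
  D_mul := rD_mul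
  d := AddMonoidHom.mk' (fun f => ⟨rD f, rD_mem f.2⟩) (fun f g => Subtype.ext (rD_add _ _))
  coe_d := fun f => rfl
  dC := fun a => by
    apply Subtype.ext
    change rD (RatFunc.C a) = 0
    rw [← RatFunc.algebraMap_C, rD_poly]; simp
  eC := fun a => by
    change evR (RatFunc.C a) c = a
    rw [← RatFunc.algebraMap_C, evR_poly]; simp
  s := ⟨algebraMap _ _ (X - Polynomial.C c), poly_mem _ _⟩
  s_ne := alg_ne (Polynomial.X_sub_C_ne_zero c)
  ds := by
    apply Subtype.ext
    change rD (algebraMap _ _ _) = 1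
    rw [rD_poly]; simp
  es := by
    change evR (algebraMap _ _ _) c = 0
    rw [evR_poly]; simp
  hdiv := by
    rintro ⟨f, hf⟩ h
    obtain ⟨a, b, hb, rfl⟩ := (noPole_iff _ _).mp hf
    change evR _ c = 0 at h
    rw [evR_div _ _ _ hb] at h
    have h2 : a.IsRoot c := (div_eq_zero_iff.mp h).resolve_right hb
    obtain ⟨x, hx⟩ := Polynomial.dvd_iff_isRoot.mpr h2
    refine ⟨⟨algebraMap _ _ x / algebraMap _ _ b, (noPole_iff _ _).mpr ⟨x, b, hb, rfl⟩⟩, ?_⟩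
    apply Subtype.ext
    change algebraMap _ _ a / algebraMap _ _ b = algebraMap _ _ _ * (_ / _)
    rw [hx, map_mul, mul_div_assoc]
  hunit := by
    rintro ⟨f, hf⟩ h
    obtain ⟨a, b, hb, rfl⟩ := (noPole_iff _ _).mp hf
    change evR _ c ≠ 0 at h
    rw [evR_div _ _ _ hb] at h
    have h2 : a.eval c ≠ 0 := fun h3 => h (by rw [h3, zero_div])
    refine ⟨⟨algebraMap _ _ b / algebraMap _ _ a, (noPole_iff _ _).mpr ⟨b, a, h2, rfl⟩⟩, ?_⟩
    apply Subtype.ext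
    change (algebraMap _ _ a / algebraMap _ _ b) * (algebraMap _ _ b / algebraMap _ _ a) = 1
    have := alg_ne (ne_of_eval hb)
    have := alg_ne (ne_of_eval h2)
    field_simp
  hpole := by
    intro f
    by_cases hf : NoPoleAt f c
    · exact Or.inl hf
    · right
      have h0 : f.denom.eval c = 0 := by
        by_contra h; exact hf h
      have hd := RatFunc.denom_ne_zero f
      obtain ⟨x, hx, hx2⟩ := Polynomial.exists_eq_pow_rootMultiplicity_mul_and_not_dvd f.denom hd c
      have hm : 0 < f.denom.rootMultiplicity c :=
        (Polynomial.rootMultiplicity_pos hd).mpr h0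
      obtain ⟨k, hk⟩ : ∃ k, f.denom.rootMultiplicity c = k + 1 :=
        ⟨f.denom.rootMultiplicity c - 1, by omega⟩
      rw [hk] at hx
      have hxc : x.eval c ≠ 0 := fun h => hx2 (Polynomial.dvd_iff_isRoot.mpr h)
      have hn : f.num.eval c ≠ 0 := by
        intro h
        obtain ⟨u, v, huv⟩ := RatFunc.isCoprime_num_denom f
        have := congrArg (Polynomial.eval c) huv
        simp [h, h0] at this
      refine ⟨k, ⟨algebraMap _ _ f.num / algebraMap _ _ x,
        (noPole_iff _ _).mpr ⟨_, x, hxc, rfl⟩⟩, ?_, ?_⟩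
      · change evR _ c ≠ 0
        rw [evR_div _ _ _ hxc]
        exact div_ne_zero hn hxc
      · change f * (algebraMap _ _ _) ^ (k + 1) = _ / _
        conv_lhs => rw [← RatFunc.num_div_denom f, hx]
        have h1 := alg_ne (ne_of_eval hxc)
        have h2 := alg_ne (Polynomial.X_sub_C_ne_zero c)
        rw [map_mul, map_pow]
        field_simp

lemma eq_zero_of_evR {F : RatFunc ℂ} {b : ℂ[X]} (hb : b ≠ 0)
    (h : ∀ t, b.eval t ≠ 0 → evR F t = 0) : F = 0 := by
  have h1 : F.num * F.denom * b = 0 := by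
    apply Polynomial.funext
    intro t
    rw [Polynomial.eval_mul, Polynomial.eval_mul, Polynomial.eval_zero]
    by_cases hbt : b.eval t = 0
    · rw [hbt, mul_zero]
    · rcases div_eq_zero_iff.mp (h t hbt) with h2 | h2 <;> rw [h2] <;> ring
  have h2 := (mul_eq_zero.mp h1).resolve_right hb
  have h3 := (mul_eq_zero.mp h2).resolve_right (RatFunc.denom_ne_zero F)
  exact RatFunc.num_eq_zero_iff.mp h3

lemma hom_aux1 {R : Type} [CommRing R] (φ : R →+* ℂ) (x y q1 p1 q2 p2 A b : R)
    (h : φ x * φ y = 2 * φ q1 ^ 2 * φ p1 - φ q1 ^ 2 + φ A * φ q1 - φ x + 4 * φ x * φ p2 + 2 * φ q1 * φ q2 * φ p2) :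
    φ (x * y - (2 * q1 ^ 2 * p1 - q1 ^ 2 + A * q1 - x + 4 * x * p2 + 2 * q1 * q2 * p2)) = 0 := by
  simp only [map_mul, map_add, map_sub, map_neg, map_pow, map_ofNat]
  linear_combination h

lemma hom_aux2 {R : Type} [CommRing R] (φ : R →+* ℂ) (x y q1 p1 q2 p2 A b : R)
    (h : φ x * φ y = -2 * φ q1 * φ p1 ^ 2 + 2 * φ q1 * φ p1 - φ A * φ p1 + φ b - 2 * φ p1 * φ q2 * φ p2) :
    φ (x * y - (-2 * q1 * p1 ^ 2 + 2 * q1 * p1 - A * p1 + b - 2 * p1 * q2 * p2)) = 0 := by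
  simp only [map_mul, map_add, map_sub, map_neg, map_pow, map_ofNat]
  linear_combination h

lemma hom_aux3 {R : Type} [CommRing R] (φ : R →+* ℂ) (x y q1 p1 q2 p2 A b : R)
    (h : φ x * φ y = 2 * φ q2 ^ 2 * φ p2 - φ q2 ^ 2 + φ A * φ q2 - φ x + 4 * φ x * φ p1 + 2 * φ q1 * φ p1 * φ q2) :
    φ (x * y - (2 * q2 ^ 2 * p2 - q2 ^ 2 + A * q2 - x + 4 * x * p1 + 2 * q1 * p1 * q2)) = 0 := by
  simp only [map_mul, map_add, map_sub, map_neg, map_pow, map_ofNat]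
  linear_combination h

lemma hom_aux4 {R : Type} [CommRing R] (φ : R →+* ℂ) (x y q1 p1 q2 p2 A b : R)
    (h : φ x * φ y = -2 * φ q2 * φ p2 ^ 2 + 2 * φ q2 * φ p2 - φ A * φ p2 + φ b - 2 * φ q1 * φ p1 * φ p2) :
    φ (x * y - (-2 * q2 * p2 ^ 2 + 2 * q2 * p2 - A * p2 + b - 2 * q1 * p1 * p2)) = 0 := by
  simp only [map_mul, map_add, map_sub, map_neg, map_pow, map_ofNat]
  linear_combination h

lemma sol_ident {a0 a1 a3 : ℂ} {q1 p1 q2 p2 : RatFunc ℂ}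
    (hsol : IsSasanoSol a0 a1 a3 q1 p1 q2 p2) :
    (RatFunc.X * rD q1 - (2 * q1 ^ 2 * p1 - q1 ^ 2 + RatFunc.C (a0 + a1 + a3) * q1 - RatFunc.X
      + 4 * RatFunc.X * p2 + 2 * q1 * q2 * p2) = 0) ∧
    (RatFunc.X * rD p1 - (-2 * q1 * p1 ^ 2 + 2 * q1 * p1 - RatFunc.C (a0 + a1 + a3) * p1
      + RatFunc.C a0 - 2 * p1 * q2 * p2) = 0) ∧
    (RatFunc.X * rD q2 - (2 * q2 ^ 2 * p2 - q2 ^ 2 + RatFunc.C (a0 + a1 + a3) * q2 - RatFunc.X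
      + 4 * RatFunc.X * p1 + 2 * q1 * p1 * q2) = 0) ∧
    (RatFunc.X * rD p2 - (-2 * q2 * p2 ^ 2 + 2 * q2 * p2 - RatFunc.C (a0 + a1 + a3) * p2
      + RatFunc.C a1 - 2 * q1 * p1 * p2) = 0) := by
  have hb : q1.denom * p1.denom * q2.denom * p2.denom ≠ 0 :=
    mul_ne_zero (mul_ne_zero (mul_ne_zero (RatFunc.denom_ne_zero _) (RatFunc.denom_ne_zero _))
      (RatFunc.denom_ne_zero _)) (RatFunc.denom_ne_zero _)
  have key : ∀ t, (q1.denom * p1.denom * q2.denom * p2.denom).eval t ≠ 0 →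
      NoPoleAt q1 t ∧ NoPoleAt p1 t ∧ NoPoleAt q2 t ∧ NoPoleAt p2 t := by
    intro t ht
    simp only [Polynomial.eval_mul, ne_eq, mul_eq_zero, not_or] at ht
    exact ⟨ht.1.1.1, ht.1.1.2, ht.1.2, ht.2⟩
  have hX : ∀ t, (RatFunc.X : RatFunc ℂ) ∈ regR t := fun t => by
    rw [← RatFunc.algebraMap_X]; exact poly_mem _ _
  have hC : ∀ t a, (RatFunc.C a : RatFunc ℂ) ∈ regR t := fun t a => by
    rw [← RatFunc.algebraMap_C]; exact poly_mem _ _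
  have eX : ∀ t, evHom t ⟨_, hX t⟩ = t := fun t => by
    change evR RatFunc.X t = t
    rw [← RatFunc.algebraMap_X, evR_poly]; simp
  have eC : ∀ t a, evHom t ⟨_, hC t a⟩ = a := fun t a => by
    change evR (RatFunc.C a) t = a
    rw [← RatFunc.algebraMap_C, evR_poly]; simp
  refine ⟨eq_zero_of_evR hb ?_, eq_zero_of_evR hb ?_, eq_zero_of_evR hb ?_, eq_zero_of_evR hb ?_⟩
  · intro t ht
    obtain ⟨h1, h2, h3, h4⟩ := key t ht
    have E := (hsol t h1 h2 h3 h4).1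
    rw [deriv_evR _ _ h1] at E
    exact hom_aux1 (evHom t) ⟨_, hX t⟩ ⟨_, rD_mem h1⟩ ⟨q1, h1⟩ ⟨p1, h2⟩ ⟨q2, h3⟩ ⟨p2, h4⟩
      ⟨_, hC t (a0 + a1 + a3)⟩ ⟨_, hC t a0⟩ (by rw [eX, eC]; exact E)
  · intro t ht
    obtain ⟨h1, h2, h3, h4⟩ := key t ht
    have E := (hsol t h1 h2 h3 h4).2.1
    rw [deriv_evR _ _ h2] at E
    exact hom_aux2 (evHom t) ⟨_, hX t⟩ ⟨_, rD_mem h2⟩ ⟨q1, h1⟩ ⟨p1, h2⟩ ⟨q2, h3⟩ ⟨p2, h4⟩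
      ⟨_, hC t (a0 + a1 + a3)⟩ ⟨_, hC t a0⟩ (by rw [eX, eC, eC]; exact E)
  · intro t ht
    obtain ⟨h1, h2, h3, h4⟩ := key t ht
    have E := (hsol t h1 h2 h3 h4).2.2.1
    rw [deriv_evR _ _ h3] at E
    exact hom_aux3 (evHom t) ⟨_, hX t⟩ ⟨_, rD_mem h3⟩ ⟨q1, h1⟩ ⟨p1, h2⟩ ⟨q2, h3⟩ ⟨p2, h4⟩
      ⟨_, hC t (a0 + a1 + a3)⟩ ⟨_, hC t a1⟩ (by rw [eX, eC]; exact E)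
  · intro t ht
    obtain ⟨h1, h2, h3, h4⟩ := key t ht
    have E := (hsol t h1 h2 h3 h4).2.2.2
    rw [deriv_evR _ _ h4] at E
    exact hom_aux4 (evHom t) ⟨_, hX t⟩ ⟨_, rD_mem h4⟩ ⟨q1, h1⟩ ⟨p1, h2⟩ ⟨q2, h3⟩ ⟨p2, h4⟩
      ⟨_, hC t (a0 + a1 + a3)⟩ ⟨_, hC t a1⟩ (by rw [eX, eC, eC]; exact E)

namespace Loc

variable {K : Type} [Field K] {L : Loc K}

lemma D_two : L.D (2 : K) = 0 := by
  have h := L.D_C 2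
  rwa [map_ofNat, L.coe2] at h

lemma D_four : L.D (4 : K) = 0 := by
  have h := L.D_C 4
  rwa [map_ofNat, L.coe4] at h

lemma D_one : L.D (1 : K) = 0 := by
  have h := L.D_C 1
  rw [map_one] at h
  exact h

lemma D_t (c : ℂ) : L.D (L.t c : K) = 1 := by
  rw [← L.coe_d, L.dt]; rfl

/-- The final local statement about the Hamiltonian. -/
lemma final {c A a0 a1 : ℂ} (hc : c ≠ 0) {q1 p1 q2 p2 : K}
    (h1 : (L.t c : K) * L.D q1 - (2 * q1 ^ 2 * p1 - q1 ^ 2 + L.C A * q1 - L.t c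
      + 4 * L.t c * p2 + 2 * q1 * q2 * p2) = 0)
    (h2 : (L.t c : K) * L.D p1 - (-2 * q1 * p1 ^ 2 + 2 * q1 * p1 - L.C A * p1
      + L.C a0 - 2 * p1 * q2 * p2) = 0)
    (h3 : (L.t c : K) * L.D q2 - (2 * q2 ^ 2 * p2 - q2 ^ 2 + L.C A * q2 - L.t c
      + 4 * L.t c * p1 + 2 * q1 * p1 * q2) = 0)
    (h4 : (L.t c : K) * L.D p2 - (-2 * q2 * p2 ^ 2 + 2 * q2 * p2 - L.C A * p2
      + L.C a1 - 2 * q1 * p1 * p2) = 0) :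
    ∃ n : ℤ, q1 ^ 2 * p1 ^ 2 - q1 ^ 2 * p1 + L.C A * q1 * p1
    - L.C a0 * q1 - L.t c * p1
  + q2 ^ 2 * p2 ^ 2 - q2 ^ 2 * p2 + L.C A * q2 * p2
    - L.C a1 * q2 - L.t c * p2
  + 4 * L.t c * p1 * p2 + 2 * q1 * p1 * q2 * p2 - L.C ((n : ℂ) * c / 4) / L.s ∈ L.R := by
  have ht : (L.t c : K) ≠ 0 := by
    intro h
    have h5 : L.t c = 0 := Subtype.ext h
    have := L.et c
    rw [h5, map_zero] at this
    exact hc this.symm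
  have C4 : ∀ a : ℂ, ((L.C (4 * a) : L.R) : K) = 4 * L.C a := by
    intro a
    rw [map_mul, map_ofNat]
    push_cast [L.coe4]
    rfl
  have D4 : ∀ p : K, L.D (4 * p - 1) = 4 * L.D p := by
    intro p
    rw [map_sub, L.D_mul, D_four, D_one]; ring
  have S : L.Sys c A (4 * a0) (4 * a1) q1 (4 * p1 - 1) q2 (4 * p2 - 1)
      (q1 * p1 + q2 * p2 - q1) (q1 * p1 + q2 * p2 - q2) := by
    refine ⟨?_, ?_, ?_, ?_, by ring, by ring⟩
    · linear_combination h1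
    · linear_combination h3
    · rw [D4, C4]; linear_combination 4 * h2
    · rw [D4, C4]; linear_combination 4 * h4
  obtain ⟨n, G, hG, eG⟩ := Loc.concl hc S
  refine ⟨n, ?_⟩
  obtain ⟨H, hH⟩ : ∃ H : K, H = q1 ^ 2 * p1 ^ 2 - q1 ^ 2 * p1 + L.C A * q1 * p1
    - L.C a0 * q1 - L.t c * p1
  + q2 ^ 2 * p2 ^ 2 - q2 ^ 2 * p2 + L.C A * q2 * p2
    - L.C a1 * q2 - L.t c * p2
  + 4 * L.t c * p1 * p2 + 2 * q1 * p1 * q2 * p2 := ⟨_, rfl⟩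
  rw [← hH]
  have hDH : 4 * L.D H = (4 * p1 - 1) * (4 * p2 - 1) - 1 := by
    have e : L.D H = L.D (q1 ^ 2 * p1 ^ 2 - q1 ^ 2 * p1 + L.C A * q1 * p1
      - L.C a0 * q1 - L.t c * p1
      + q2 ^ 2 * p2 ^ 2 - q2 ^ 2 * p2 + L.C A * q2 * p2
      - L.C a1 * q2 - L.t c * p2
      + 4 * L.t c * p1 * p2 + 2 * q1 * p1 * q2 * p2) := by rw [hH]
    simp only [pow_two, map_add, map_sub, L.D_mul, L.D_C, D_t, D_two, D_four] at e
    apply mul_left_cancel₀ ht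
    rw [e]
    linear_combination
      4 * (2 * q1 * p1 ^ 2 - 2 * q1 * p1 + L.C A * p1 - L.C a0 + 2 * p1 * q2 * p2) * h1
      + 4 * (2 * q2 * p2 ^ 2 - 2 * q2 * p2 + L.C A * p2 - L.C a1 + 2 * q1 * p1 * p2) * h3
      + 4 * (2 * q1 ^ 2 * p1 - q1 ^ 2 + L.C A * q1 - L.t c + 4 * L.t c * p2
        + 2 * q1 * q2 * p2) * h2
      + 4 * (2 * q2 ^ 2 * p2 - q2 ^ 2 + L.C A * q2 - L.t c + 4 * L.t c * p1
        + 2 * q1 * p1 * q2) * h4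
  obtain ⟨f, hf⟩ : ∃ f : K, f = L.C ((n : ℂ) * c / 4) / L.s := ⟨_, rfl⟩
  rw [← hf]
  have hfs : f * (L.s : K) = L.C ((n : ℂ) * c / 4) := by
    rw [hf]; exact div_mul_cancel₀ _ L.s_ne
  have hDf := L.D_pole1 hfs
  rw [L.dC] at hDf
  obtain ⟨w, hw⟩ := L.hdiv (L.C (1 / 4) * (G - L.s ^ 2) + L.C ((n : ℂ) * c / 4)) (by
    simp only [map_add, map_mul, map_sub, map_pow, L.eC, L.es, eG]; ring)
  have q4 : ((L.C (1 / 4) : L.R) : K) * 4 = 1 := by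
    have : (L.C (1 / 4) : L.R) * 4 = 1 := by
      rw [← map_ofNat L.C 4, ← map_mul, ← map_one L.C]; norm_num
    have h3 := congrArg Subtype.val this
    push_cast [L.coe4] at h3
    exact h3
  have hwK := congrArg Subtype.val hw
  push_cast at hwK
  apply L.regular_of_D (w := w)
  apply mul_left_cancel₀ L.s_ne
  rw [← hwK, map_sub]
  push_cast at hDf
  linear_combination -hDf + L.C (1 / 4) * hG + L.C (1 / 4) * (L.s : K) ^ 2 * hDH
    - L.D H * (L.s : K) ^ 2 * q4

end Loc

theorem sasano_hamiltonian_residue_at_c (a0 a1 a2 a3 : ℂ)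
    (hpar : a0 + a1 + 2 * a2 + a3 = 1 / 2)
    (q1 p1 q2 p2 : RatFunc ℂ)
    (hsol : IsSasanoSol a0 a1 a3 q1 p1 q2 p2)
    (c : ℂ) (hc : c ≠ 0) :
    ∃ n : ℤ,
      NoPoleAt (sasanoH a0 a1 a3 q1 p1 q2 p2
        - RatFunc.C ((n : ℂ) * c / 4) / (RatFunc.X - RatFunc.C c)) c := by
  obtain ⟨h1, h2, h3, h4⟩ := sol_ident hsol
  have hs : (((ratLoc c).s : (ratLoc c).R) : RatFunc ℂ) = RatFunc.X - RatFunc.C c := by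
    change algebraMap _ _ _ = _
    rw [map_sub, RatFunc.algebraMap_X, RatFunc.algebraMap_C]
  have hC : ∀ a : ℂ, (((ratLoc c).C a : (ratLoc c).R) : RatFunc ℂ) = RatFunc.C a := fun _ => rfl
  have ht : (((ratLoc c).t c : (ratLoc c).R) : RatFunc ℂ) = RatFunc.X := by
    unfold Loc.t
    rw [Subring.coe_add, hs, hC]; ring
  have hD : ∀ f, (ratLoc c).D f = rD f := fun _ => rfl
  have key := Loc.final (L := ratLoc c) (A := a0 + a1 + a3) (a0 := a0) (a1 := a1) hc
    (q1 := q1) (p1 := p1) (q2 := q2) (p2 := p2)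
    (by rw [ht, hC, hD]; exact h1) (by rw [ht, hC, hC, hD]; exact h2)
    (by rw [ht, hC, hD]; exact h3) (by rw [ht, hC, hC, hD]; exact h4)
  obtain ⟨n, hn⟩ := key
  refine ⟨n, ?_⟩
  simp only [ht, hC, hs] at hn
  exact hn
end

section
/- Let (q1,p1,q2,p2) be a rational solution of A5^(2)(α0,α1,α2,α3) and let H be its Hamiltonian. Then H has no pole at 0, and 4·(h∞ − H(0)) ∈ ℤ, where h∞ = (3/4)·(α0+α1+α3)² − (1/2)·(−2α0+α3)·(−2α1+α3) − 3·(α0+α1)·α3 is the limit of H(t) + t/4 along the cocompact filter on ℂ. -/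
open Filter Topology Polynomial

/-- An abstract place of a differential field `K` with residue field `ℂ`:
`V f a` says that `f` is regular at the place, with value `a`. -/
structure Plc (K : Type) [Field K] where
  C : ℂ →+* K
  V : K → ℂ → Prop
  x : K
  κ : K
  κ0 : ℂ
  θ : K → K
  V_C : ∀ a, V (C a) a
  V_uniq : ∀ {f a b}, V f a → V f b → a = b
  V_add : ∀ {f g a b}, V f a → V g b → V (f + g) (a + b)
  V_mul : ∀ {f g a b}, V f a → V g b → V (f * g) (a * b)
  V_inv : ∀ {f a}, V f a → a ≠ 0 → V f⁻¹ a⁻¹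
  x_ne : x ≠ 0
  V_x : V x 0
  decomp : ∀ f : K, f ≠ 0 → ∃ n : ℤ, ∃ e a, V e a ∧ a ≠ 0 ∧ f = x ^ n * e
  θ_add : ∀ f g, θ (f + g) = θ f + θ g
  θ_mul : ∀ f g, θ (f * g) = θ f * g + f * θ g
  θ_C : ∀ a, θ (C a) = 0
  θ_V : ∀ {f a}, V f a → V (θ f) 0
  θ_x : θ x = κ * x
  V_κ : V κ κ0
  κ0_ne : κ0 ≠ 0

namespace Plc
variable {K : Type} [Field K] (P : Plc K)

/-- Regularity at the place. -/
def Reg (f : K) : Prop := ∃ a, P.V f a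

variable {P}

lemma V_zero : P.V 0 0 := by simpa using P.V_C 0
lemma V_one : P.V 1 1 := by simpa using P.V_C 1
lemma V_two : P.V 2 2 := by have := P.V_C 2; rwa [map_ofNat] at this
lemma V_four : P.V 4 4 := by have := P.V_C 4; rwa [map_ofNat] at this
lemma V_neg {f a} (h : P.V f a) : P.V (-f) (-a) := by
  have := P.V_mul (P.V_C (-1)) h
  simpa using this
lemma V_sub {f g a b} (h : P.V f a) (h' : P.V g b) : P.V (f - g) (a - b) := by
  simpa [sub_eq_add_neg] using P.V_add h (V_neg h')
lemma V_pow {f a} (h : P.V f a) (n : ℕ) : P.V (f ^ n) (a ^ n) := by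
  induction n with
  | zero => simpa using V_one
  | succ k ih => simpa [pow_succ] using P.V_mul ih h

lemma V_congr {f g : K} {a b : ℂ} (h : P.V f a) (h1 : f = g) (h2 : a = b) : P.V g b := by
  subst h1; subst h2; exact h

lemma V.reg {f a} (h : P.V f a) : P.Reg f := ⟨a, h⟩
lemma Reg.add {f g} (h : P.Reg f) (h' : P.Reg g) : P.Reg (f + g) := by
  obtain ⟨a, h⟩ := h; obtain ⟨b, h'⟩ := h'; exact ⟨_, P.V_add h h'⟩
lemma Reg.mul {f g} (h : P.Reg f) (h' : P.Reg g) : P.Reg (f * g) := by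
  obtain ⟨a, h⟩ := h; obtain ⟨b, h'⟩ := h'; exact ⟨_, P.V_mul h h'⟩
lemma Reg.sub {f g} (h : P.Reg f) (h' : P.Reg g) : P.Reg (f - g) := by
  obtain ⟨a, h⟩ := h; obtain ⟨b, h'⟩ := h'; exact ⟨_, V_sub h h'⟩
lemma Reg.congr {f g} (h : P.Reg f) (h' : f = g) : P.Reg g := h' ▸ h
lemma regC (a : ℂ) : P.Reg (P.C a) := ⟨_, P.V_C a⟩
lemma reg1 : P.Reg 1 := ⟨_, V_one⟩
lemma reg2 : P.Reg 2 := ⟨_, V_two⟩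
lemma reg4 : P.Reg 4 := ⟨_, V_four⟩
lemma Reg.pow {f} (h : P.Reg f) (n : ℕ) : P.Reg (f ^ n) := by
  obtain ⟨a, h⟩ := h; exact ⟨_, V_pow h n⟩

lemma two_ne (P : Plc K) : (2 : K) ≠ 0 := by
  have : P.C 2 ≠ 0 := (map_ne_zero P.C).2 two_ne_zero
  rwa [map_ofNat] at this

lemma four_ne (P : Plc K) : (4 : K) ≠ 0 := by
  have : P.C 4 ≠ 0 := (map_ne_zero P.C).2 (by norm_num)
  rwa [map_ofNat] at this
lemma V_half {f a} (h : P.V (2 * f) a) : P.V f (a / 2) := by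
  have h2 := P.V_mul (P.V_inv (f := 2) V_two two_ne_zero) h
  have := two_ne P
  exact V_congr h2 (by field_simp) (by ring)
lemma V_quarter {f a} (h : P.V (4 * f) a) : P.V f (a / 4) := by
  have h2 := P.V_mul (P.V_inv (f := 4) V_four (by norm_num)) h
  have := four_ne P
  exact V_congr h2 (by field_simp) (by ring)
lemma Reg.half {f} (h : P.Reg (2 * f)) : P.Reg f := by
  obtain ⟨a, h⟩ := h; exact ⟨_, V_half h⟩
lemma Reg.quarter {f} (h : P.Reg (4 * f)) : P.Reg f := by
  obtain ⟨a, h⟩ := h; exact ⟨_, V_quarter h⟩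

lemma V_ne {f a} (h : P.V f a) (ha : a ≠ 0) : f ≠ 0 := by
  rintro rfl; exact ha (P.V_uniq h V_zero)

/-- regular or the inverse vanishes -/
lemma inv_of_not_reg {f} (h : ¬ P.Reg f) : f ≠ 0 ∧ P.V f⁻¹ 0 := by
  have hf : f ≠ 0 := by rintro rfl; exact h ⟨0, V_zero⟩
  refine ⟨hf, ?_⟩
  obtain ⟨n, e, a, he, ha, rfl⟩ := P.decomp f hf
  obtain ⟨k, rfl | rfl⟩ := n.eq_nat_or_neg
  · exact absurd (((V_pow P.V_x k).reg).mul he.reg |>.congr (by simp)) h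
  · have hk : k ≠ 0 := by
      rintro rfl; exact h (he.reg.congr (by simp))
    have := P.V_mul (V_pow P.V_x k) (P.V_inv he ha)
    exact V_congr this (by simp [mul_comm]) (by simp [hk])

lemma div_x {f} (h : P.V f 0) : ∃ g, P.Reg g ∧ f = P.x * g := by
  by_cases hf : f = 0
  · exact ⟨0, ⟨0, V_zero⟩, by simp [hf]⟩
  obtain ⟨n, e, a, he, ha, rfl⟩ := P.decomp f hf
  have hx := P.x_ne
  have hn : 0 < n := by
    by_contra hn
    obtain ⟨k, hk⟩ : ∃ k : ℕ, n = -k := ⟨n.natAbs, by omega⟩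
    subst hk
    have h1 := P.V_mul h (V_pow P.V_x k)
    have h2 : P.x ^ (-(k:ℤ)) * e * P.x ^ k = e := by simp; field_simp
    rw [h2] at h1
    exact ha (by simpa using P.V_uniq he h1)
  obtain ⟨k, rfl⟩ : ∃ k : ℕ, n = k + 1 := ⟨(n - 1).natAbs, by omega⟩
  refine ⟨P.x ^ k * e, ((V_pow P.V_x k).reg).mul he.reg, ?_⟩
  rw [zpow_add₀ hx]; simp; ring

lemma θ_zero : P.θ 0 = 0 := by simpa using P.θ_C 0
lemma θ_one : P.θ 1 = 0 := by simpa using P.θ_C 1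
lemma θ_neg (f) : P.θ (-f) = - P.θ f := by
  have := P.θ_add f (-f)
  rw [add_neg_cancel, θ_zero] at this
  linear_combination -this
lemma θ_sub (f g) : P.θ (f - g) = P.θ f - P.θ g := by
  rw [sub_eq_add_neg, P.θ_add, θ_neg]; ring
lemma θ_inv {f L} (hf : f ≠ 0) (h : P.θ f = f * L) : P.θ f⁻¹ = f⁻¹ * (-L) := by
  have := P.θ_mul f f⁻¹
  rw [mul_inv_cancel₀ hf, θ_one, h] at this
  have h2 : f * (P.θ f⁻¹ + f⁻¹ * L) = 0 := by linear_combination -this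
  rcases mul_eq_zero.1 h2 with h3 | h3
  · exact absurd h3 hf
  · linear_combination h3
lemma θ_xpow (n : ℕ) : P.θ (P.x ^ n) = P.x ^ n * (n * P.κ) := by
  induction n with
  | zero => simp [θ_one]
  | succ k ih => rw [pow_succ, P.θ_mul, ih, P.θ_x]; push_cast; ring
lemma θ_xzpow (n : ℤ) : P.θ (P.x ^ n) = P.x ^ n * (n * P.κ) := by
  obtain ⟨k, rfl | rfl⟩ := n.eq_nat_or_neg
  · simpa using θ_xpow k
  · have := θ_inv (pow_ne_zero k P.x_ne) (θ_xpow (P := P) k)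
    simpa using this
lemma V_int (n : ℤ) : P.V n n := by simpa using P.V_C n

lemma logd_of {n : ℤ} {f e : K} {a : ℂ} (he : P.V e a) (ha : a ≠ 0) (hf : f = P.x ^ n * e) :
    ∃ L, P.V L (n * P.κ0) ∧ P.θ f = f * L := by
  have hne := V_ne he ha
  refine ⟨n * P.κ + P.θ e * e⁻¹, ?_, ?_⟩
  · exact V_congr (P.V_add (P.V_mul (V_int n) P.V_κ) (P.V_mul (P.θ_V he) (P.V_inv he ha))) rfl
      (by simp)
  · rw [hf, P.θ_mul, θ_xzpow]; field_simp

lemma logd (f : K) : ∃ L, P.Reg L ∧ P.θ f = f * L := by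
  by_cases hf : f = 0
  · exact ⟨0, ⟨0, V_zero⟩, by simp [hf, θ_zero]⟩
  obtain ⟨n, e, a, he, ha, h⟩ := P.decomp f hf
  obtain ⟨L, h1, h2⟩ := logd_of he ha h
  exact ⟨L, h1.reg, h2⟩

/-- logarithmic derivative at a pole of known order -/
lemma logd_pole {k : ℕ} {f : K} {a : ℂ} (he : P.V (P.x ^ k * f) a) (ha : a ≠ 0) :
    ∃ L, P.V L (-(k * P.κ0)) ∧ P.θ f = f * L := by
  have hx := P.x_ne
  obtain ⟨L, h1, h2⟩ := logd_of (n := -k) (f := f) he ha (by simp; field_simp)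
  exact ⟨L, V_congr h1 rfl (by push_cast; ring), h2⟩

/-- Rescaled solution of the Sasano system at a place. -/
structure Sol (P : Plc K) (ε l τ : K) (a0 a1 a3 : ℂ) (Q1 p1 Q2 p2 A : K) : Prop where
  hA : A = 2 * (Q1 * p1 + Q2 * p2) + ε * P.C (a0 + a1 + a3)
  hq1 : P.θ Q1 = Q1 * (A + l - Q1) + τ * (4 * p2 - 1)
  hp1 : P.θ p1 = p1 * (2 * Q1 - A) + ε * P.C a0
  hq2 : P.θ Q2 = Q2 * (A + l - Q2) + τ * (4 * p1 - 1)
  hp2 : P.θ p2 = p2 * (2 * Q2 - A) + ε * P.C a1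
  hε : P.Reg ε
  hl : P.Reg l
  hτ : τ ≠ 0

namespace Sol
variable {ε l τ : K} {a0 a1 a3 : ℂ} {Q1 p1 Q2 p2 A : K}

lemma symm (S : Sol P ε l τ a0 a1 a3 Q1 p1 Q2 p2 A) : Sol P ε l τ a1 a0 a3 Q2 p2 Q1 p1 A where
  hA := by rw [S.hA, add_comm a0 a1]; ring
  hq1 := S.hq2
  hp1 := S.hp2
  hq2 := S.hq1
  hp2 := S.hp1
  hε := S.hε
  hl := S.hl
  hτ := S.hτ

lemma hf (S : Sol P ε l τ a0 a1 a3 Q1 p1 Q2 p2 A) :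
    P.θ (p1 + p2 - 1) = -(A * (p1 + p2 - 1)) - ε * P.C a3 := by
  rw [θ_sub, θ_one, P.θ_add, S.hp1, S.hp2]
  have := S.hA
  simp only [map_add] at this
  linear_combination -this

/-- if `f = p1 + p2 - 1` is not vanishing to positive order, `A` is regular, with known value -/
lemma regA_of (S : Sol P ε l τ a0 a1 a3 Q1 p1 Q2 p2 A) (h : p1 + p2 - 1 ≠ 0)
    (h' : P.Reg (p1 + p2 - 1)⁻¹) : P.Reg A := by
  obtain ⟨L, hL, h2⟩ := logd (P := P) (p1 + p2 - 1)
  refine ((Reg.sub (P := P) ⟨0, V_zero⟩ hL).sub ((S.hε.mul (regC a3)).mul h')).congr ?_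
  have := S.hf
  rw [h2] at this
  field_simp
  linear_combination -this

lemma regA_of_not_reg (S : Sol P ε l τ a0 a1 a3 Q1 p1 Q2 p2 A) (h : ¬ P.Reg (p1 + p2 - 1)) :
    P.Reg A :=
  S.regA_of (inv_of_not_reg h).1 (inv_of_not_reg h).2.reg

/-- value of `A` at a pole of `f` of order `k` -/
lemma valA (S : Sol P ε l τ a0 a1 a3 Q1 p1 Q2 p2 A) {k : ℕ} {a : ℂ} (hk : k ≠ 0)
    (h : P.V (P.x ^ k * (p1 + p2 - 1)) a) (ha : a ≠ 0) : P.V A (k * P.κ0) := by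
  obtain ⟨L, hL, h2⟩ := logd_pole h ha
  have hne : p1 + p2 - 1 ≠ 0 := right_ne_zero_of_mul (V_ne h ha)
  have hx := P.x_ne
  have hinv : P.V (p1 + p2 - 1)⁻¹ 0 := by
    refine V_congr (P.V_mul (V_pow P.V_x k) (P.V_inv h ha)) ?_ (by simp [hk])
    field_simp
  obtain ⟨e, hε⟩ := S.hε
  refine V_congr (V_sub (V_neg hL) (P.V_mul (P.V_mul hε (P.V_C a3)) hinv)) ?_ (by ring)
  have := S.hf
  rw [h2] at this
  field_simp
  linear_combination -this

lemma reg_q_sub (S : Sol P ε l τ a0 a1 a3 Q1 p1 Q2 p2 A) (h0 : p1 ≠ 0) (h : P.Reg p1⁻¹) :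
    P.Reg (2 * Q1 - A) := by
  obtain ⟨L, hL, h2⟩ := logd (P := P) p1
  refine (hL.sub ((S.hε.mul (regC a0)).mul h)).congr ?_
  have := S.hp1
  rw [h2] at this
  field_simp
  linear_combination this

lemma val_q_sub (S : Sol P ε l τ a0 a1 a3 Q1 p1 Q2 p2 A) {k : ℕ} {a : ℂ} (hk : k ≠ 0)
    (h : P.V (P.x ^ k * p1) a) (ha : a ≠ 0) : P.V (2 * Q1 - A) (-(k * P.κ0)) := by
  obtain ⟨L, hL, h2⟩ := logd_pole h ha
  have hne : p1 ≠ 0 := right_ne_zero_of_mul (V_ne h ha)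
  have hx := P.x_ne
  have hinv : P.V p1⁻¹ 0 := by
    refine V_congr (P.V_mul (V_pow P.V_x k) (P.V_inv h ha)) ?_ (by simp [hk])
    field_simp
  obtain ⟨e, hε⟩ := S.hε
  refine V_congr (V_sub hL (P.V_mul (P.V_mul hε (P.V_C a0)) hinv)) ?_ (by ring)
  have := S.hp1
  rw [h2] at this
  field_simp
  linear_combination this

lemma reg_p_of (h : P.Reg (4 * p1 - 1)) : P.Reg p1 :=
  ((h.add reg1).congr (by ring) : P.Reg (4 * p1)).quarter

/-- If `A - 2 Q1` is regular and `A` is not, then `τ (4 p2 - 1) = A ^ 2 * U` with `U → -1/4`. -/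
lemma asympt (S : Sol P ε l τ a0 a1 a3 Q1 p1 Q2 p2 A) (h : P.Reg (2 * Q1 - A))
    (hA : ¬ P.Reg A) : ∃ U, P.V U (-1 / 4) ∧ τ * (4 * p2 - 1) = A ^ 2 * U := by
  obtain ⟨hA0, hAi⟩ := inv_of_not_reg hA
  obtain ⟨b, hb⟩ := h
  obtain ⟨L, ⟨c, hL⟩, h2⟩ := logd (P := P) Q1
  obtain ⟨d, hl⟩ := S.hl
  have h2' := two_ne P
  -- Q1 * A⁻¹ → 1/2
  have hr : P.V (Q1 * A⁻¹) ((1 + b * 0) / 2) := by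
    apply V_half
    refine V_congr (P.V_add V_one (P.V_mul hb hAi)) ?_ rfl
    field_simp; ring
  refine ⟨(Q1 * A⁻¹) * (L * A⁻¹ - 1 - l * A⁻¹ + Q1 * A⁻¹), ?_, ?_⟩
  · refine V_congr (P.V_mul hr (P.V_add (V_sub (V_sub (P.V_mul hL hAi) V_one)
      (P.V_mul hl hAi)) hr)) rfl (by norm_num)
  · have := S.hq1
    rw [h2] at this
    field_simp
    linear_combination -this

/-- If `A` is regular and `Q1` is not, then `τ (4 p2 - 1) = Q1 ^ 2 * U` with `U → 1`. -/
lemma asympt' (S : Sol P ε l τ a0 a1 a3 Q1 p1 Q2 p2 A) (h : ¬ P.Reg Q1)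
    (hA : P.Reg A) : ∃ U, P.V U 1 ∧ τ * (4 * p2 - 1) = Q1 ^ 2 * U := by
  obtain ⟨hQ0, hQi⟩ := inv_of_not_reg h
  obtain ⟨b, hb⟩ := hA
  obtain ⟨L, ⟨c, hL⟩, h2⟩ := logd (P := P) Q1
  obtain ⟨d, hl⟩ := S.hl
  refine ⟨L * Q1⁻¹ - (A + l) * Q1⁻¹ + 1, ?_, ?_⟩
  · refine V_congr (P.V_add (V_sub (P.V_mul hL hQi) (P.V_mul (P.V_add hb hl) hQi)) V_one) rfl
      (by norm_num)
  · have := S.hq1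
    rw [h2] at this
    field_simp
    linear_combination -this

lemma reg_tau (S : Sol P ε l τ a0 a1 a3 Q1 p1 Q2 p2 A) (h : P.Reg Q1) (hA : P.Reg A) :
    P.Reg (τ * (4 * p2 - 1)) := by
  obtain ⟨q, hq⟩ := h
  refine ((P.θ_V hq).reg.sub (hq.reg.mul ((hA.add S.hl).sub hq.reg))).congr ?_
  rw [S.hq1]; ring

lemma one_pole (S : Sol P ε l τ a0 a1 a3 Q1 p1 Q2 p2 A) (h1 : ¬ P.Reg p1) (h2 : P.Reg p2) :
    P.Reg A ∧ P.Reg Q1 ∧ P.Reg Q2 := by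
  have hf : ¬ P.Reg (p1 + p2 - 1) := fun h => h1 (((h.sub h2).add reg1).congr (by ring))
  have hA := S.regA_of_not_reg hf
  obtain ⟨hp1, hp1i⟩ := inv_of_not_reg h1
  have hQ1 : P.Reg Q1 := ((S.reg_q_sub hp1 hp1i.reg).add hA |>.congr (by ring) :
    P.Reg (2 * Q1)).half
  refine ⟨hA, hQ1, ?_⟩
  by_contra hQ2
  obtain ⟨hQ0, hQi⟩ := inv_of_not_reg hQ2
  obtain ⟨U, hU, hU2⟩ := S.symm.asympt' hQ2 hA
  -- p2 * Q2 regular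
  have hpq : P.Reg (p2 * Q2) := by
    obtain ⟨L, ⟨c, hL⟩, hL2⟩ := logd (P := P) p2
    obtain ⟨b, hb⟩ := hA
    have hW : P.V (2 - A * Q2⁻¹ - L * Q2⁻¹) 2 :=
      V_congr (V_sub (V_sub V_two (P.V_mul hb hQi)) (P.V_mul hL hQi)) rfl (by norm_num)
    have hWi := P.V_inv hW two_ne_zero
    have hW0 := V_ne hW two_ne_zero
    refine ((Reg.sub (P := P) ⟨0, V_zero⟩ (S.hε.mul (regC a1))).mul hWi.reg).congr ?_
    rw [mul_inv_eq_iff_eq_mul₀ hW0]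
    have := S.hp2
    rw [hL2] at this
    field_simp
    linear_combination this
  have hp20 : P.V p2 0 := by
    obtain ⟨c, hc⟩ := hpq
    refine V_congr (P.V_mul hc hQi) ?_ (by ring)
    field_simp
  have hqg : P.Reg (Q1 * (4 * p1 - 1)) := by
    have h3 : P.Reg (2 * (Q1 * p1)) := by
      refine ((hA.sub (S.hε.mul (regC (a0 + a1 + a3)))).sub (reg2.mul hpq)).congr ?_
      have := S.hA
      linear_combination this
    refine ((reg2.mul h3).sub hQ1).congr (by ring)
  have hU0 := V_ne hU one_ne_zero
  have hUi := P.V_inv hU one_ne_zero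
  obtain ⟨w, hw, hww⟩ : ∃ w, P.Reg w ∧ Q1 = τ * Q2⁻¹ ^ 2 * w := by
    refine ⟨_, hqg.mul hUi.reg, ?_⟩
    have : τ * (Q1 * (4 * p1 - 1)) = Q1 * (Q2 ^ 2 * U) := by linear_combination Q1 * hU2
    field_simp
    linear_combination -this
  obtain ⟨L, hL, hL2⟩ := logd (P := P) Q1
  have hg2 : P.V (4 * p2 - 1) 0 := by
    obtain ⟨z, hz⟩ := hw.mul (hL.sub ((hA.add S.hl).sub hQ1))
    refine V_congr (P.V_mul (V_pow hQi 2) hz) ?_ (by ring)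
    have := S.hq1
    rw [hL2] at this
    have hτ := S.hτ
    have h5 : τ * (4 * p2 - 1) = τ * (Q2⁻¹ ^ 2 * (w * (L - (A + l - Q1)))) := by
      have h6 : τ * (4 * p2 - 1) = Q1 * (L - (A + l - Q1)) := by linear_combination -this
      rw [h6]
      nth_rewrite 1 [hww]
      ring
    exact (mul_left_cancel₀ hτ h5).symm
  have := P.V_uniq hg2 (V_sub (P.V_mul V_four hp20) V_one)
  norm_num at this

lemma common (S : Sol P ε l τ a0 a1 a3 Q1 p1 Q2 p2 A) (h : ¬ (P.Reg p1 ∧ P.Reg p2)) :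
    P.Reg A ∧ P.Reg Q1 ∧ P.Reg Q2 := by
  by_cases h1 : P.Reg p1
  · have h2 : ¬ P.Reg p2 := fun h2 => h ⟨h1, h2⟩
    obtain ⟨a, b, c⟩ := S.symm.one_pole h2 h1
    exact ⟨a, c, b⟩
  by_cases h2 : P.Reg p2
  · exact S.one_pole h1 h2
  obtain ⟨hp1, hp1i⟩ := inv_of_not_reg h1
  obtain ⟨hp2, hp2i⟩ := inv_of_not_reg h2
  have k1 := S.reg_q_sub hp1 hp1i.reg
  have k2 := S.symm.reg_q_sub hp2 hp2i.reg
  have hA : P.Reg A := by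
    by_contra hA
    have hf : P.Reg (p1 + p2 - 1) := by
      by_contra hf; exact hA (S.regA_of_not_reg hf)
    obtain ⟨U, hU, hU2⟩ := S.asympt k1 hA
    obtain ⟨W, hW, hW2⟩ := S.symm.asympt k2 hA
    have hA0 := (inv_of_not_reg hA).1
    have hs : P.V (U + W) (-1 / 2) := V_congr (P.V_add hU hW) rfl (by norm_num)
    have hs0 := V_ne hs (by norm_num)
    apply h2
    apply reg_p_of
    refine ((((reg4.mul hf).add reg2).mul hU.reg).mul (P.V_inv hs (by norm_num)).reg).congr ?_
    rw [mul_inv_eq_iff_eq_mul₀ hs0]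
    have hτ := S.hτ
    apply mul_left_cancel₀ hτ
    linear_combination W * hU2 * (-1) + U * hW2
  refine ⟨hA, ?_, ?_⟩
  · exact ((k1.add hA).congr (by ring) : P.Reg (2 * Q1)).half
  · exact ((k2.add hA).congr (by ring) : P.Reg (2 * Q2)).half

lemma reg_of_x {g : K} (h : P.V (P.x * g) 0) : P.Reg g := by
  obtain ⟨k, hk, h2⟩ := div_x h
  exact hk.congr (mul_left_cancel₀ P.x_ne h2).symm

lemma reg_of_x2 {g : K} (h : P.V (P.x ^ 2 * g) 0) : P.Reg (P.x * g) :=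
  reg_of_x (P := P) (V_congr h (by ring) rfl)

lemma V_g {p : K} {a : ℂ} (h : P.V p a) : P.V (4 * p - 1) (4 * a - 1) :=
  V_sub (P.V_mul V_four h) V_one

lemma V_p {p : K} {k : ℕ} (hk : k ≠ 0) {a : ℂ} (h : P.V (P.x ^ k * (4 * p - 1)) a) :
    P.V (P.x ^ k * p) (a / 4) := by
  apply V_quarter
  refine V_congr (P.V_add h (V_pow P.V_x k)) (by ring) (by simp [hk])

lemma V_f {p p' : K} {k : ℕ} (hk : k ≠ 0) {a a' : ℂ} (h : P.V (P.x ^ k * (4 * p - 1)) a)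
    (h' : P.V (P.x ^ k * (4 * p' - 1)) a') :
    P.V (P.x ^ k * (p + p' - 1)) ((a + a') / 4) := by
  refine V_congr (V_sub (P.V_add (V_p hk h) (V_p hk h')) (V_pow P.V_x k)) (by ring) ?_
  simp [hk]; ring

/-- Analysis at `t = 0`. -/
lemma at_zero (S : Sol P 1 0 P.x a0 a1 a3 Q1 p1 Q2 p2 A) :
    P.Reg (P.x * ((4 * p1 - 1) * (4 * p2 - 1))) := by
  by_cases h1 : P.Reg p1 ∧ P.Reg p2
  · exact P.V_x.reg.mul (((reg4.mul h1.1).sub reg1).mul ((reg4.mul h1.2).sub reg1))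
  obtain ⟨hA, hQ1, hQ2⟩ := S.common h1
  have k2 := S.reg_tau hQ1 hA
  have k1 := S.symm.reg_tau hQ2 hA
  by_cases r1 : P.Reg p1
  · exact (k2.mul ((reg4.mul r1).sub reg1)).congr (by ring)
  by_cases r2 : P.Reg p2
  · exact (k1.mul ((reg4.mul r2).sub reg1)).congr (by ring)
  exfalso
  obtain ⟨y1, k1⟩ := k1
  obtain ⟨y2, k2⟩ := k2
  have hy1 : y1 ≠ 0 := by
    rintro rfl; exact r1 (reg_p_of (reg_of_x k1))
  have hy2 : y2 ≠ 0 := by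
    rintro rfl; exact r2 (reg_p_of (reg_of_x k2))
  have k1' : P.V (P.x ^ 1 * (4 * p1 - 1)) y1 := by simpa using k1
  have k2' : P.V (P.x ^ 1 * (4 * p2 - 1)) y2 := by simpa using k2
  have m1 := S.val_q_sub one_ne_zero (V_p one_ne_zero k1') (by simpa using hy1)
  have m2 := S.symm.val_q_sub one_ne_zero (V_p one_ne_zero k2') (by simpa using hy2)
  obtain ⟨α, hA⟩ := hA
  obtain ⟨b1, hQ1⟩ := hQ1
  obtain ⟨b2, hQ2⟩ := hQ2
  have e1 := P.V_uniq m1 (V_sub (P.V_mul V_two hQ1) hA)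
  have e2 := P.V_uniq m2 (V_sub (P.V_mul V_two hQ2) hA)
  have e3 := P.V_uniq (P.θ_V hQ1) (V_congr (P.V_add (P.V_mul hQ1
    (V_sub (P.V_add hA V_zero) hQ1)) k2) S.hq1.symm rfl)
  have e4 := P.V_uniq (P.θ_V hQ2) (V_congr (P.V_add (P.V_mul hQ2
    (V_sub (P.V_add hA V_zero) hQ2)) k1) S.hq2.symm rfl)
  have hb : b2 = b1 := by linear_combination (e1 - e2) / 2
  subst hb
  have hy : y2 = y1 := by linear_combination e4 - e3
  subst hy
  have e5 := P.V_uniq hA (S.valA one_ne_zero (V_f one_ne_zero k1' k2')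
    (by intro h; apply hy1; linear_combination 2 * h))
  push_cast at e1 e5
  have hb0 : b2 = 0 := by linear_combination e5 / 2 - e1 / 2
  subst hb0
  apply hy1; linear_combination -e3

/-- Analysis at infinity. -/
lemma inf_reg (S : Sol P 1 0 P.x⁻¹ a0 a1 a3 Q1 p1 Q2 p2 A) : P.Reg p1 ∧ P.Reg p2 := by
  by_contra h
  obtain ⟨hA, hQ1, hQ2⟩ := S.common h
  have k2 := S.reg_tau hQ1 hA
  have k1 := S.symm.reg_tau hQ2 hA
  have hx := P.x_ne
  exact h ⟨reg_p_of ((P.V_x.reg.mul k1).congr (by field_simp)),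
    reg_p_of ((P.V_x.reg.mul k2).congr (by field_simp))⟩

lemma not_reg_sq {f U : K} {a : ℂ} (hU : P.V U a) (ha : a ≠ 0) (hf : ¬ P.Reg f) {g : K}
    (hg : P.Reg g) (h : P.x⁻¹ * g = f ^ 2 * U) : False := by
  obtain ⟨hf0, hfi⟩ := inv_of_not_reg hf
  obtain ⟨k, ⟨c, hk⟩, hk2⟩ := div_x hfi
  obtain ⟨d, hd⟩ := hg
  have hx := P.x_ne
  have hk0 : k ≠ 0 := by
    rintro rfl; simp at hk2; exact hf0 hk2
  have : P.V U 0 := by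
    refine V_congr (P.V_mul P.V_x (P.V_mul hd (V_pow hk 2))) ?_ (by ring)
    have hff : f = (P.x * k)⁻¹ := by rw [← hk2, inv_inv]
    rw [hff] at h
    field_simp at h
    linear_combination h
  exact ha (P.V_uniq hU this)

lemma inf_A (S : Sol P 1 0 P.x⁻¹ a0 a1 a3 Q1 p1 Q2 p2 A) : P.Reg A := by
  by_contra hA
  obtain ⟨⟨b1, h1⟩, ⟨b2, h2⟩⟩ := S.inf_reg
  have hf := V_sub (P.V_add h1 h2) V_one
  by_cases h0 : b1 + b2 - 1 = 0
  · by_cases hb1 : b1 = 0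
    · have hb2 : b2 ≠ 0 := by rintro rfl; simp [hb1] at h0
      obtain ⟨U, hU, hU2⟩ := S.symm.asympt (S.symm.reg_q_sub (V_ne h2 hb2) (P.V_inv h2 hb2).reg) hA
      exact not_reg_sq hU (by norm_num) hA (V_g h1).reg hU2
    · obtain ⟨U, hU, hU2⟩ := S.asympt (S.reg_q_sub (V_ne h1 hb1) (P.V_inv h1 hb1).reg) hA
      exact not_reg_sq hU (by norm_num) hA (V_g h2).reg hU2
  · exact hA (S.regA_of (V_ne hf h0) (P.V_inv hf h0).reg)

lemma inf_Q (S : Sol P 1 0 P.x⁻¹ a0 a1 a3 Q1 p1 Q2 p2 A) : P.Reg Q1 := by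
  by_contra hQ
  obtain ⟨U, hU, hU2⟩ := S.asympt' hQ S.inf_A
  exact not_reg_sq hU (by norm_num) hQ ((reg4.mul S.inf_reg.2).sub reg1) hU2

lemma inf_g (S : Sol P 1 0 P.x⁻¹ a0 a1 a3 Q1 p1 Q2 p2 A) : P.Reg (P.x⁻¹ * (4 * p2 - 1)) :=
  S.reg_tau S.inf_Q S.inf_A

lemma inf_p (S : Sol P 1 0 P.x⁻¹ a0 a1 a3 Q1 p1 Q2 p2 A) : P.V p2 (1 / 4) := by
  obtain ⟨c, hc⟩ := S.inf_g
  have hx := P.x_ne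
  apply V_quarter
  refine V_congr (P.V_add (P.V_mul P.V_x hc) V_one) ?_ (by ring)
  field_simp; ring

/-- values at infinity -/
lemma inf_vals (S : Sol P 1 0 P.x⁻¹ a0 a1 a3 Q1 p1 Q2 p2 A) :
    P.V Q1 (a3 - 2 * a0) ∧ P.V Q2 (a3 - 2 * a1) ∧ P.V A (2 * a3) := by
  obtain ⟨α, hA⟩ := S.inf_A
  obtain ⟨d1, h1⟩ := S.inf_Q
  obtain ⟨d2, h2⟩ := S.symm.inf_Q
  have hp2 := S.inf_p
  have hp1 := S.symm.inf_p
  have e1 := P.V_uniq (P.θ_V hp1) (V_congr (P.V_add (P.V_mul hp1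
    (V_sub (P.V_mul V_two h1) hA)) (P.V_mul V_one (P.V_C a0))) S.hp1.symm rfl)
  have e2 := P.V_uniq (P.θ_V hp2) (V_congr (P.V_add (P.V_mul hp2
    (V_sub (P.V_mul V_two h2) hA)) (P.V_mul V_one (P.V_C a1))) S.hp2.symm rfl)
  have e3 := P.V_uniq hA (V_congr (P.V_add (P.V_mul V_two (P.V_add (P.V_mul h1 hp1)
    (P.V_mul h2 hp2))) (P.V_mul V_one (P.V_C (a0 + a1 + a3)))) S.hA.symm rfl)
  have ha : α = 2 * a3 := by linear_combination 2 * e3 - 2 * e1 - 2 * e2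
  refine ⟨V_congr h1 rfl ?_, V_congr h2 rfl ?_, V_congr hA rfl ha⟩
  · linear_combination -2 * e1 + ha / 2
  · linear_combination -2 * e2 + ha / 2

/-- The Hamiltonian plus `t / 4` at infinity. -/
lemma inf_H (S : Sol P 1 0 P.x⁻¹ a0 a1 a3 Q1 p1 Q2 p2 A) :
    P.V ((Q1 * p1 + Q2 * p2) ^ 2 + P.C (a0 + a1 + a3) * (Q1 * p1 + Q2 * p2) - Q1 ^ 2 * p1
      - Q2 ^ 2 * p2 - P.C a0 * Q1 - P.C a1 * Q2
      + P.C (1 / 4) * (P.x⁻¹ * ((4 * p1 - 1) * (4 * p2 - 1))))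
    (3 / 4 * (a0 + a1 + a3) ^ 2
        - 1 / 2 * (-2 * a0 + a3) * (-2 * a1 + a3) - 3 * (a0 + a1) * a3) := by
  obtain ⟨h1, h2, -⟩ := S.inf_vals
  have hp2 := S.inf_p
  have hp1 := S.symm.inf_p
  obtain ⟨c, hc⟩ := S.inf_g
  have hu := P.V_add (P.V_mul h1 hp1) (P.V_mul h2 hp2)
  refine V_congr (P.V_add (V_sub (V_sub (V_sub (V_sub (P.V_add (V_pow hu 2)
    (P.V_mul (P.V_C (a0 + a1 + a3)) hu)) (P.V_mul (V_pow h1 2) hp1)) (P.V_mul (V_pow h2 2) hp2))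
    (P.V_mul (P.V_C a0) h1)) (P.V_mul (P.V_C a1) h2))
    (P.V_mul (P.V_C (1 / 4)) (P.V_mul hc (V_g hp1)))) (by ring) (by ring)


/-- value relation coming from the equation of `Q1` at a finite nonzero point -/
lemma fin_E (S : Sol P P.x P.κ (P.x ^ 2 * P.κ) a0 a1 a3 Q1 p1 Q2 p2 A) {α b1 : ℂ} (hA : P.V A α) (h1 : P.V Q1 b1) :
    ∃ y2, P.V (P.x ^ 2 * (4 * p2 - 1)) y2 ∧ b1 * (α + P.κ0 - b1) + P.κ0 * y2 = 0 := by
  obtain ⟨c, hc⟩ := S.reg_tau h1.reg hA.reg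
  have hκ := V_ne P.V_κ P.κ0_ne
  have hκ0 := P.κ0_ne
  refine ⟨P.κ0⁻¹ * c, V_congr (P.V_mul (P.V_inv P.V_κ P.κ0_ne) hc) (by field_simp) rfl, ?_⟩
  have e := P.V_uniq (P.θ_V h1) (V_congr (P.V_add (P.V_mul h1
    (V_sub (P.V_add hA P.V_κ) h1)) hc) S.hq1.symm rfl)
  field_simp
  linear_combination -e

/-- equation for `d` when `Q1 = x d` -/
lemma fin_d (S : Sol P P.x P.κ (P.x ^ 2 * P.κ) a0 a1 a3 Q1 p1 Q2 p2 A) {d : K} (h : Q1 = P.x * d) :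
    P.θ d = d * (A - P.x * d) + P.κ * (P.x * (4 * p2 - 1)) := by
  have := S.hq1
  rw [h, P.θ_mul, P.θ_x] at this
  apply mul_left_cancel₀ P.x_ne
  linear_combination this

lemma fin_21 (S : Sol P P.x P.κ (P.x ^ 2 * P.κ) a0 a1 a3 Q1 p1 Q2 p2 A) {α b1 b2 y1 z2 : ℂ} (hA : P.V A α) (h1 : P.V Q1 b1) (h2 : P.V Q2 b2)
    (k1 : P.V (P.x ^ 2 * (4 * p1 - 1)) y1) (hy1 : y1 ≠ 0)
    (k2 : P.V (P.x * (4 * p2 - 1)) z2) (hz2 : z2 ≠ 0)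
    (hE : b2 * (α + P.κ0 - b2) + P.κ0 * y1 = 0) : False := by
  have hκ0 := P.κ0_ne
  have k2' : P.V (P.x ^ 1 * (4 * p2 - 1)) z2 := by simpa using k2
  have k22 : P.V (P.x ^ 2 * (4 * p2 - 1)) 0 := V_congr (P.V_mul P.V_x k2) (by ring) (by ring)
  have e5 := P.V_uniq hA (S.valA two_ne_zero (V_f two_ne_zero k1 k22) (by simpa using hy1))
  have e1 := P.V_uniq (S.val_q_sub two_ne_zero (V_p two_ne_zero k1) (by simpa using hy1))
    (V_sub (P.V_mul V_two h1) hA)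
  have e2 := P.V_uniq (S.symm.val_q_sub one_ne_zero (V_p one_ne_zero k2') (by simpa using hz2))
    (V_sub (P.V_mul V_two h2) hA)
  push_cast at e1 e2 e5
  have hb1 : b1 = 0 := by linear_combination e5 / 2 - e1 / 2
  have hb2 : b2 = P.κ0 / 2 := by linear_combination e5 / 2 - e2 / 2
  subst hb1
  obtain ⟨d, ⟨d1, hd⟩, hd2⟩ := div_x h1
  have e6 := P.V_uniq (P.θ_V hd) (V_congr (P.V_add (P.V_mul hd (V_sub hA (P.V_mul P.V_x hd)))
    (P.V_mul P.V_κ k2)) (S.fin_d hd2).symm rfl)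
  have e7 := P.V_uniq (P.V_mul P.V_x hA) (V_congr (P.V_add (P.V_mul V_two (P.V_add
    (P.V_mul hd (V_p two_ne_zero k1)) (P.V_mul h2 (V_p one_ne_zero k2'))))
    (P.V_mul (V_pow P.V_x 2) (P.V_C (a0 + a1 + a3))))
    (by rw [S.hA, hd2]; ring : _ = P.x * A) rfl)
  rw [e5, hb2] at hE
  have hy : y1 = -(5 / 4) * P.κ0 := by
    apply mul_left_cancel₀ hκ0; linear_combination hE
  rw [e5] at e6
  have hd1 : d1 = - z2 / 2 := by
    apply mul_left_cancel₀ hκ0; linear_combination - e6 / 2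
  rw [hd1, hy, hb2] at e7
  have : P.κ0 * z2 = 0 := by linear_combination -(16 / 9) * e7
  exact (mul_ne_zero hκ0 hz2) this

lemma fin_11 (S : Sol P P.x P.κ (P.x ^ 2 * P.κ) a0 a1 a3 Q1 p1 Q2 p2 A) {α b1 b2 z1 z2 : ℂ} (hA : P.V A α) (h1 : P.V Q1 b1) (h2 : P.V Q2 b2)
    (k1 : P.V (P.x * (4 * p1 - 1)) z1) (hz1 : z1 ≠ 0)
    (k2 : P.V (P.x * (4 * p2 - 1)) z2) (hz2 : z2 ≠ 0)
    (hE : b1 * (α + P.κ0 - b1) = 0) : z1 * z2 = - P.κ0 := by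
  have hκ0 := P.κ0_ne
  have k1' : P.V (P.x ^ 1 * (4 * p1 - 1)) z1 := by simpa using k1
  have k2' : P.V (P.x ^ 1 * (4 * p2 - 1)) z2 := by simpa using k2
  have e1 := P.V_uniq (S.val_q_sub one_ne_zero (V_p one_ne_zero k1') (by simpa using hz1))
    (V_sub (P.V_mul V_two h1) hA)
  have e2 := P.V_uniq (S.symm.val_q_sub one_ne_zero (V_p one_ne_zero k2') (by simpa using hz2))
    (V_sub (P.V_mul V_two h2) hA)
  push_cast at e1 e2
  have hb : b2 = b1 := by linear_combination (e1 - e2) / 2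
  subst hb
  rcases mul_eq_zero.1 hE with hb | hb
  · subst hb
    have hα : α = P.κ0 := by linear_combination e1
    subst hα
    obtain ⟨d, ⟨d1, hd⟩, hd2⟩ := div_x h1
    obtain ⟨d', ⟨d1', hd'⟩, hd2'⟩ := div_x h2
    have e6 := P.V_uniq (P.θ_V hd) (V_congr (P.V_add (P.V_mul hd (V_sub hA (P.V_mul P.V_x hd)))
      (P.V_mul P.V_κ k2)) (S.fin_d hd2).symm rfl)
    have e6' := P.V_uniq (P.θ_V hd') (V_congr (P.V_add (P.V_mul hd' (V_sub hA
      (P.V_mul P.V_x hd'))) (P.V_mul P.V_κ k1)) (S.symm.fin_d hd2').symm rfl)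
    have e7 := P.V_uniq hA (V_congr (P.V_add (P.V_mul V_two (P.V_add
      (P.V_mul hd (V_p one_ne_zero k1')) (P.V_mul hd' (V_p one_ne_zero k2'))))
      (P.V_mul P.V_x (P.V_C (a0 + a1 + a3))))
      (by rw [S.hA, hd2, hd2']; ring : _ = A) rfl)
    have f1 : d1 = - z2 := by
      apply mul_left_cancel₀ hκ0; linear_combination - e6
    have f2 : d1' = - z1 := by
      apply mul_left_cancel₀ hκ0; linear_combination - e6'
    rw [f1, f2] at e7
    linear_combination e7
  · have hα : α = -3 * P.κ0 := by linear_combination 2 * hb - e1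
    have hb' : b2 = -2 * P.κ0 := by linear_combination -hb + hα
    subst hα
    subst hb'
    have hz : z1 + z2 = 0 := by
      by_contra hz
      have e5 := P.V_uniq hA (S.valA one_ne_zero (V_f one_ne_zero k1' k2')
        (div_ne_zero hz (by norm_num)))
      push_cast at e5
      apply hκ0
      linear_combination -e5 / 4
    obtain ⟨f0, hf0⟩ : P.Reg (p1 + p2 - 1) := by
      have := V_f one_ne_zero k1' k2'
      exact reg_of_x (V_congr this (by ring) (by simp [hz]))
    have e3 := P.V_uniq (P.θ_V hf0) (V_congr (V_sub (V_neg (P.V_mul hA hf0))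
      (P.V_mul P.V_x (P.V_C a3))) S.hf.symm rfl)
    have hf00 : f0 = 0 := by
      apply mul_left_cancel₀ hκ0; linear_combination -e3 / 3
    obtain ⟨d, ⟨d1, hd⟩, hd2⟩ := div_x (V_congr (V_sub h1 h2) rfl (sub_self _))
    have hdd : P.θ d = d * (A - (Q1 + Q2)) + P.κ * (P.x * (4 * p2 - 1) - P.x * (4 * p1 - 1)) := by
      have h3 : P.θ (Q1 - Q2) = P.θ (P.x * d) := by rw [hd2]
      rw [θ_sub, P.θ_mul, P.θ_x, S.hq1, S.hq2] at h3
      apply mul_left_cancel₀ P.x_ne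
      linear_combination -h3 + (A + P.κ - Q1 - Q2) * hd2
    have e6 := P.V_uniq (P.θ_V hd) (V_congr (P.V_add (P.V_mul hd (V_sub hA (P.V_add h1 h2)))
      (P.V_mul P.V_κ (V_sub k2 k1))) hdd.symm rfl)
    have e7 := P.V_uniq hA (V_congr (P.V_add (P.V_mul V_two (V_sub
      (P.V_mul h1 (P.V_add hf0 V_one)) (P.V_mul hd (V_p one_ne_zero k2'))))
      (P.V_mul P.V_x (P.V_C (a0 + a1 + a3))))
      (by rw [S.hA]; linear_combination 2 * p2 * hd2 : _ = A) rfl)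
    have f1 : d1 = -2 * z2 := by
      apply mul_left_cancel₀ hκ0; linear_combination - e6 + P.κ0 * hz
    rw [f1, hf00] at e7
    linear_combination z2 * hz + e7

lemma fin_one (S : Sol P P.x P.κ (P.x ^ 2 * P.κ) a0 a1 a3 Q1 p1 Q2 p2 A) (r1 : ¬ P.Reg p1) (r2 : P.Reg p2) :
    ∃ w, P.V (P.x ^ 2 * ((4 * p1 - 1) * (4 * p2 - 1))) w ∧
      (w = 0 ∨ w = -P.κ0 ∨ w = -2 * P.κ0 ∨ w = -4 * P.κ0) := by
  have hκ0 := P.κ0_ne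
  obtain ⟨⟨α, hA⟩, ⟨b1, h1⟩, ⟨b2, h2⟩⟩ := S.one_pole r1 r2
  obtain ⟨p, hp⟩ := r2
  obtain ⟨y1, k1, hE⟩ := S.symm.fin_E hA h2
  have k2 : P.V (P.x ^ 2 * (4 * p2 - 1)) 0 :=
    V_congr (P.V_mul (V_pow P.V_x 2) (V_g hp)) rfl (by ring)
  by_cases hy1 : y1 = 0
  · subst hy1
    obtain ⟨z, hz⟩ := reg_of_x2 k1
    exact ⟨0, V_congr (P.V_mul P.V_x (P.V_mul hz (V_g hp))) (by ring) (by ring), Or.inl rfl⟩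
  have e5 := P.V_uniq hA (S.valA two_ne_zero (V_f two_ne_zero k1 k2) (by simpa using hy1))
  have e1 := P.V_uniq (S.val_q_sub two_ne_zero (V_p two_ne_zero k1) (by simpa using hy1))
    (V_sub (P.V_mul V_two h1) hA)
  push_cast at e1 e5
  have hb1 : b1 = 0 := by linear_combination e5 / 2 - e1 / 2
  subst hb1
  obtain ⟨d, ⟨d1, hd⟩, hd2⟩ := div_x h1
  have e7 := P.V_uniq (P.V_mul P.V_x hA) (V_congr (P.V_add (P.V_mul V_two (P.V_add
    (P.V_mul hd (V_p two_ne_zero k1)) (P.V_mul P.V_x (P.V_mul h2 hp))))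
    (P.V_mul (V_pow P.V_x 2) (P.V_C (a0 + a1 + a3))))
    (by rw [S.hA, hd2]; ring : _ = P.x * A) rfl)
  have hd1 : d1 = 0 := by
    have : d1 * y1 = 0 := by linear_combination -2 * e7
    exact (mul_eq_zero.1 this).resolve_right hy1
  subst hd1
  obtain ⟨e, ⟨e0, he⟩, he2⟩ := div_x hd
  have hee : P.κ * e + P.θ e = e * (A - P.x * d) + P.κ * (4 * p2 - 1) := by
    have := S.fin_d hd2
    nth_rewrite 1 2 [he2] at this
    rw [P.θ_mul, P.θ_x] at this
    apply mul_left_cancel₀ P.x_ne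
    linear_combination this
  have e8 := P.V_uniq (P.V_add (P.V_mul P.V_κ he) (P.θ_V he)) (V_congr (P.V_add (P.V_mul he
    (V_sub hA (P.V_mul P.V_x hd))) (P.V_mul P.V_κ (V_g hp))) hee.symm rfl)
  have e9 := P.V_uniq hA (V_congr (P.V_add (P.V_mul V_two (P.V_add
      (P.V_mul he (V_p two_ne_zero k1)) (P.V_mul h2 hp)))
      (P.V_mul P.V_x (P.V_C (a0 + a1 + a3))))
      (by rw [S.hA, hd2, he2]; ring : _ = A) rfl)
  have e10 := P.V_uniq (P.θ_V hp) (V_congr (P.V_add (P.V_mul hp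
    (V_sub (P.V_mul V_two h2) hA)) (P.V_mul P.V_x (P.V_C a1))) S.hp2.symm rfl)
  subst e5
  have he0 : e0 = - (4 * p - 1) := by
    apply mul_left_cancel₀ hκ0; linear_combination -e8
  subst he0
  refine ⟨_, V_congr (P.V_mul k1 (V_g hp)) (by ring) rfl, ?_⟩
  by_cases hp0 : p = 0
  · subst hp0
    right; right; right
    linear_combination 2 * e9
  · have hb2 : b2 = P.κ0 := by
      apply mul_left_cancel₀ hp0
      linear_combination -e10 / 2
    subst hb2
    have hy : y1 = -2 * P.κ0 := by
      apply mul_left_cancel₀ hκ0; linear_combination hE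
    subst hy
    have hp' : p = 1 / 2 := by
      apply mul_left_cancel₀ hκ0; linear_combination -e9 / 6
    subst hp'
    right; right; left
    ring

/-- Analysis at a finite nonzero point. -/
lemma at_fin (S : Sol P P.x P.κ (P.x ^ 2 * P.κ) a0 a1 a3 Q1 p1 Q2 p2 A) :
    ∃ w, P.V (P.x ^ 2 * ((4 * p1 - 1) * (4 * p2 - 1))) w ∧
      (w = 0 ∨ w = -P.κ0 ∨ w = -2 * P.κ0 ∨ w = -4 * P.κ0) := by
  have hκ0 := P.κ0_ne
  by_cases h : P.Reg p1 ∧ P.Reg p2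
  · obtain ⟨⟨p, hp⟩, ⟨p', hp'⟩⟩ := h
    exact ⟨0, V_congr (P.V_mul (V_pow P.V_x 2) (P.V_mul (V_g hp) (V_g hp'))) rfl (by ring),
      Or.inl rfl⟩
  by_cases r1 : P.Reg p1
  · by_cases r2 : P.Reg p2
    · exact absurd ⟨r1, r2⟩ h
    · obtain ⟨w, hw, hw'⟩ := S.symm.fin_one r2 r1
      exact ⟨w, V_congr hw (by ring) rfl, hw'⟩
  by_cases r2 : P.Reg p2
  · exact S.fin_one r1 r2
  obtain ⟨⟨α, hA⟩, ⟨b1, h1⟩, ⟨b2, h2⟩⟩ := S.common h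
  obtain ⟨y1, k1, hE1⟩ := S.symm.fin_E hA h2
  obtain ⟨y2, k2, hE2⟩ := S.fin_E hA h1
  by_cases hy1 : y1 = 0
  · subst hy1
    obtain ⟨z1, k1'⟩ := reg_of_x2 k1
    have hz1 : z1 ≠ 0 := by rintro rfl; exact r1 (reg_p_of (reg_of_x k1'))
    by_cases hy2 : y2 = 0
    · subst hy2
      obtain ⟨z2, k2'⟩ := reg_of_x2 k2
      have hz2 : z2 ≠ 0 := by rintro rfl; exact r2 (reg_p_of (reg_of_x k2'))
      have := S.fin_11 hA h1 h2 k1' hz1 k2' hz2 (by linear_combination hE2)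
      exact ⟨_, V_congr (P.V_mul k1' k2') (by ring) rfl, Or.inr (Or.inl this)⟩
    · exact (S.symm.fin_21 hA h2 h1 k2 hy2 k1' hz1 hE2).elim
  · by_cases hy2 : y2 = 0
    · subst hy2
      obtain ⟨z2, k2'⟩ := reg_of_x2 k2
      have hz2 : z2 ≠ 0 := by rintro rfl; exact r2 (reg_p_of (reg_of_x k2'))
      exact (S.fin_21 hA h1 h2 k1 hy1 k2' hz2 hE1).elim
    · exfalso
      have e1 := P.V_uniq (S.val_q_sub two_ne_zero (V_p two_ne_zero k1) (by simpa using hy1))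
        (V_sub (P.V_mul V_two h1) hA)
      have e2 := P.V_uniq (S.symm.val_q_sub two_ne_zero (V_p two_ne_zero k2) (by simpa using hy2))
        (V_sub (P.V_mul V_two h2) hA)
      have hb : b2 = b1 := by linear_combination (e1 - e2) / 2
      subst hb
      have hy : y2 = y1 := by
        apply mul_left_cancel₀ hκ0; linear_combination hE2 - hE1
      subst hy
      have e5 := P.V_uniq hA (S.valA two_ne_zero (V_f two_ne_zero k1 k2)
        (by intro h; apply hy1; linear_combination 2 * h))
      have hb0 : b2 = 0 := by linear_combination e5 / 2 - e1 / 2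
      subst hb0
      apply hy1
      apply mul_left_cancel₀ hκ0; linear_combination hE2

end Sol

/-- Residues of the Hamiltonian at a finite nonzero point. -/
lemma res_H {H G : K} {w : ℂ} (hH : P.θ H = P.x * P.κ * (G - 1) * P.C (1 / 4))
    (hw : P.V (P.x ^ 2 * G) w) : P.V (P.x * H) (-w / 4) := by
  have hκ0 := P.κ0_ne
  have hx := P.x_ne
  have hxθ : P.V (P.x * P.θ H) (P.κ0 * w / 4) := by
    rw [hH]
    refine V_congr (P.V_mul (P.V_mul P.V_κ (V_sub hw (V_pow P.V_x 2))) (P.V_C (1 / 4)))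
      (by ring) (by ring)
  have hreg : P.Reg H → P.V (P.x * H) (-w / 4) := by
    rintro ⟨h, hh⟩
    have h1 := P.V_mul P.V_x (P.θ_V hh)
    have h2 := P.V_uniq hxθ h1
    have h3 : w = 0 := by apply mul_left_cancel₀ hκ0; linear_combination 4 * h2
    subst h3
    exact V_congr (P.V_mul P.V_x hh) rfl (by ring)
  by_cases hH0 : H = 0
  · exact hreg ⟨0, hH0 ▸ V_zero⟩
  obtain ⟨n, e, a, he, ha, hn⟩ := P.decomp H hH0
  by_cases hn0 : n = 0
  · subst hn0
    exact hreg ⟨a, V_congr he (by simp [hn]) rfl⟩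
  obtain ⟨L, hL, hL2⟩ := logd_of he ha hn
  have hne : (n : ℂ) * P.κ0 ≠ 0 := mul_ne_zero (by exact_mod_cast hn0) hκ0
  have hL0 := V_ne hL hne
  have hxH : P.V (P.x * H) (P.κ0 * w / 4 * ((n : ℂ) * P.κ0)⁻¹) := by
    refine V_congr (P.V_mul hxθ (P.V_inv hL hne)) ?_ rfl
    rw [hL2]; field_simp
  by_cases hn1 : n = -1
  · subst hn1
    refine V_congr hxH rfl ?_
    push_cast; field_simp
  · have : P.V (P.x * H) 0 := by
      have h1 := P.θ_V hxH
      rw [P.θ_mul, P.θ_x, hL2] at h1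
      have h2 : P.V (P.κ + L) (P.κ0 + n * P.κ0) := P.V_add P.V_κ hL
      have h3 : P.κ0 + n * P.κ0 ≠ 0 := by
        have : (n : ℂ) + 1 ≠ 0 := by
          intro h; apply hn1
          have : ((n + 1 : ℤ) : ℂ) = 0 := by push_cast; exact h
          have := Int.cast_eq_zero.1 this
          omega
        have h4 := mul_ne_zero this hκ0
        intro h5; apply h4; linear_combination h5
      have h6 := V_ne h2 h3
      refine V_congr (P.V_mul h1 (P.V_inv h2 h3)) ?_ (by ring)
      field_simp
    exact hreg (Sol.reg_of_x this)

/-- Regularity of the Hamiltonian at zero. -/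
lemma reg_H {H R : K} (hH : P.θ H = R) (hR : P.Reg R) : P.Reg H := by
  by_contra h
  obtain ⟨n, e, a, he, ha, hn⟩ := P.decomp H (inv_of_not_reg h).1
  by_cases hn0 : n = 0
  · subst hn0
    exact h ⟨a, V_congr he (by simp [hn]) rfl⟩
  obtain ⟨L, hL, hL2⟩ := logd_of he ha hn
  have hne : (n : ℂ) * P.κ0 ≠ 0 := mul_ne_zero (by exact_mod_cast hn0) P.κ0_ne
  have hL0 := V_ne hL hne
  apply h
  refine (hR.mul (P.V_inv hL hne).reg).congr ?_
  rw [← hH, hL2]; field_simp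

end Plc

namespace SasanoAux

local notation "am" => algebraMap ℂ[X] (RatFunc ℂ)

/-- derivative of a rational function -/
noncomputable def rd (f : RatFunc ℂ) : RatFunc ℂ :=
  am (derivative f.num * f.denom - f.num * derivative f.denom) / am (f.denom ^ 2)

lemma am_ne {p : ℂ[X]} (h : p ≠ 0) : am p ≠ 0 := RatFunc.algebraMap_ne_zero h

lemma rd_div_poly {n d p q : ℂ[X]} (e1 : n * q = p * d) :
    (derivative n * d - n * derivative d) * q ^ 2 =
      (derivative p * q - p * derivative q) * d ^ 2 := by
  have e2 := congrArg derivative e1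
  rw [derivative_mul, derivative_mul] at e2
  linear_combination d * q * e2 - (derivative d * q + derivative q * d) * e1

lemma rd_div (p q : ℂ[X]) (hq : q ≠ 0) :
    rd (am p / am q) = am (derivative p * q - p * derivative q) / am (q ^ 2) := by
  generalize hf : am p / am q = f
  have e1 : f.num * q = p * f.denom := (RatFunc.num_mul_eq_mul_denom_iff hq).2 hf.symm
  have hd := f.denom_ne_zero
  rw [rd, div_eq_div_iff (am_ne (pow_ne_zero 2 hd)) (am_ne (pow_ne_zero 2 hq)), ← map_mul,
    ← map_mul]
  exact congrArg (fun z => am z) (rd_div_poly e1)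

lemma exists_rep (f : RatFunc ℂ) : ∃ p q : ℂ[X], q ≠ 0 ∧ f = am p / am q :=
  ⟨f.num, f.denom, f.denom_ne_zero, (RatFunc.num_div_denom f).symm⟩

lemma rd_am (p : ℂ[X]) : rd (am p) = am (derivative p) := by
  have := rd_div p 1 one_ne_zero
  simpa using this

lemma rd_C (a : ℂ) : rd (RatFunc.C a) = 0 := by
  rw [← RatFunc.algebraMap_C, rd_am]; simp

lemma rd_X : rd RatFunc.X = 1 := by
  rw [← RatFunc.algebraMap_X, rd_am]; simp

lemma rd_add (f g : RatFunc ℂ) : rd (f + g) = rd f + rd g := by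
  obtain ⟨p, q, hq, rfl⟩ := exists_rep f
  obtain ⟨p', q', hq', rfl⟩ := exists_rep g
  have h1 := am_ne hq
  have h2 := am_ne hq'
  have : am p / am q + am p' / am q' = am (p * q' + q * p') / am (q * q') := by
    simp only [map_add, map_mul]; field_simp
  rw [this, rd_div _ _ (mul_ne_zero hq hq'), rd_div _ _ hq, rd_div _ _ hq']
  simp only [map_add, map_mul, derivative_add, derivative_mul, map_sub, map_pow]
  field_simp
  ring

lemma rd_mul (f g : RatFunc ℂ) : rd (f * g) = rd f * g + f * rd g := by
  obtain ⟨p, q, hq, rfl⟩ := exists_rep f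
  obtain ⟨p', q', hq', rfl⟩ := exists_rep g
  have h1 := am_ne hq
  have h2 := am_ne hq'
  have : am p / am q * (am p' / am q') = am (p * p') / am (q * q') := by
    simp only [map_mul]; field_simp
  rw [this, rd_div _ _ (mul_ne_zero hq hq'), rd_div _ _ hq, rd_div _ _ hq']
  simp only [map_add, map_mul, derivative_mul, map_sub, map_pow]
  field_simp
  ring

/-- `f` is regular at `c` with value `a`. -/
def VV (c : ℂ) (f : RatFunc ℂ) (a : ℂ) : Prop := NoPoleAt f c ∧ evR f c = a

lemma VV_of {c : ℂ} {f : RatFunc ℂ} {p q : ℂ[X]} (hf : f = am p / am q) (hq : q.eval c ≠ 0)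
    {a : ℂ} (ha : a = p.eval c / q.eval c) : VV c f a := by
  have hq0 : q ≠ 0 := by rintro rfl; simp at hq
  have e1 : f.num * q = p * f.denom := (RatFunc.num_mul_eq_mul_denom_iff hq0).2 hf
  have hd : f.denom.eval c ≠ 0 := by
    intro h
    obtain ⟨k, hk⟩ : f.denom ∣ q := by rw [hf]; exact RatFunc.denom_div_dvd p q
    apply hq
    rw [hk, eval_mul, h, zero_mul]
  refine ⟨hd, ?_⟩
  have e2 := congrArg (eval c) e1
  rw [eval_mul, eval_mul] at e2
  rw [ha, evR, div_eq_div_iff hd hq, e2]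

lemma VV_rep {c : ℂ} {f : RatFunc ℂ} {a : ℂ} (h : VV c f a) :
    ∃ p q : ℂ[X], f = am p / am q ∧ q.eval c ≠ 0 ∧ a = p.eval c / q.eval c :=
  ⟨f.num, f.denom, (RatFunc.num_div_denom f).symm, h.1, h.2.symm⟩

lemma VV_am (c : ℂ) (p : ℂ[X]) : VV c (am p) (p.eval c) :=
  VV_of (p := p) (q := 1) (by simp) (by simp) (by simp)

lemma VV_mul {c : ℂ} {f g : RatFunc ℂ} {a b : ℂ} (hf : VV c f a) (hg : VV c g b) :
    VV c (f * g) (a * b) := by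
  obtain ⟨p, q, rfl, hq, rfl⟩ := VV_rep hf
  obtain ⟨p', q', rfl, hq', rfl⟩ := VV_rep hg
  refine VV_of (p := p * p') (q := q * q') ?_ (by simp [hq, hq']) ?_
  · rw [map_mul, map_mul]; ring
  · simp only [eval_mul]; field_simp

lemma VV_add {c : ℂ} {f g : RatFunc ℂ} {a b : ℂ} (hf : VV c f a) (hg : VV c g b) :
    VV c (f + g) (a + b) := by
  obtain ⟨p, q, rfl, hq, rfl⟩ := VV_rep hf
  obtain ⟨p', q', rfl, hq', rfl⟩ := VV_rep hg
  have hq0 : q ≠ 0 := by rintro rfl; simp at hq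
  have hq0' : q' ≠ 0 := by rintro rfl; simp at hq'
  have h1 := am_ne hq0
  have h2 := am_ne hq0'
  refine VV_of (p := p * q' + q * p') (q := q * q') ?_ (by simp [hq, hq']) ?_
  · simp only [map_mul, map_add]; field_simp
  · simp only [eval_mul, eval_add]; field_simp

lemma VV_inv {c : ℂ} {f : RatFunc ℂ} {a : ℂ} (hf : VV c f a) (ha : a ≠ 0) : VV c f⁻¹ a⁻¹ := by
  obtain ⟨p, q, rfl, hq, rfl⟩ := VV_rep hf
  have hp : p.eval c ≠ 0 := by rintro h; apply ha; rw [h]; simp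
  exact VV_of (p := q) (q := p) (by rw [inv_div]) hp (by rw [inv_div])

lemma VV_rd {c : ℂ} {f : RatFunc ℂ} (h : NoPoleAt f c) : VV c (rd f) (deriv (evR f) c) := by
  refine VV_of (p := _) (q := _) rfl (by rw [eval_pow]; exact pow_ne_zero 2 h) ?_
  have h1 := (f.num.hasDerivAt c).div (f.denom.hasDerivAt c) h
  have h2 : deriv (evR f) c = _ := h1.deriv
  rw [h2]
  simp

lemma poly_decomp (c : ℂ) (p : ℂ[X]) (hp : p ≠ 0) :
    ∃ n : ℕ, ∃ q : ℂ[X], p = (Polynomial.X - Polynomial.C c) ^ n * q ∧ q.eval c ≠ 0 := by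
  obtain ⟨q, h1, h2⟩ := Polynomial.exists_eq_pow_rootMultiplicity_mul_and_not_dvd p hp c
  exact ⟨_, q, h1, fun h => h2 (dvd_iff_isRoot.2 h)⟩

/-- The place of `ℂ(t)` at `c`, with derivation `κ (t - c) d/dt`. -/
noncomputable def plc (c : ℂ) (k : ℂ[X]) (hk : k.eval c ≠ 0) : Plc (RatFunc ℂ) where
  C := RatFunc.C
  V := VV c
  x := RatFunc.X - RatFunc.C c
  κ := am k
  κ0 := k.eval c
  θ f := am k * (RatFunc.X - RatFunc.C c) * rd f
  V_C a := by
    have := VV_am c (Polynomial.C a)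
    rwa [RatFunc.algebraMap_C, eval_C] at this
  V_uniq h h' := h.2.symm.trans h'.2
  V_add := VV_add
  V_mul := VV_mul
  V_inv := VV_inv
  x_ne := by
    have := am_ne (X_sub_C_ne_zero c)
    simpa using this
  V_x := by
    have := VV_am c (Polynomial.X - Polynomial.C c)
    simpa using this
  decomp f hf := by
    obtain ⟨n, N, h1, h2⟩ := poly_decomp c f.num (RatFunc.num_ne_zero hf)
    obtain ⟨m, M, h3, h4⟩ := poly_decomp c f.denom f.denom_ne_zero
    have hx := am_ne (X_sub_C_ne_zero c)
    refine ⟨n - m, am N / am M, _, VV_of rfl h4 rfl, div_ne_zero h2 h4, ?_⟩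
    have : f = am f.num / am f.denom := (RatFunc.num_div_denom f).symm
    rw [this, h1, h3]
    simp only [map_mul, map_pow, map_sub, RatFunc.algebraMap_X, RatFunc.algebraMap_C] at hx ⊢
    rw [zpow_sub₀ hx]
    simp only [zpow_natCast]
    rw [mul_div_mul_comm]
  θ_add f g := by rw [rd_add]; ring
  θ_mul f g := by rw [rd_mul]; ring
  θ_C a := by rw [rd_C]; ring
  θ_V {f a} h := by
    have h1 := VV_am c (k * (Polynomial.X - Polynomial.C c))
    have h2 := VV_mul h1 (VV_rd h.1)
    simpa using h2
  θ_x := by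
    have : RatFunc.X - RatFunc.C c = am (Polynomial.X - Polynomial.C c) := by simp
    nth_rewrite 2 [this]
    rw [rd_am]
    simp
  V_κ := VV_am c k
  κ0_ne := hk

/-- The basic place at `c`. -/
noncomputable abbrev pl (c : ℂ) : Plc (RatFunc ℂ) := plc c 1 (by simp)

/-- The substitution `t ↦ 1/t` on polynomials. -/
noncomputable def phi : ℂ[X] →ₐ[ℂ] RatFunc ℂ := aeval (RatFunc.X⁻¹ : RatFunc ℂ)

lemma phi_inj : Function.Injective phi := by
  have h : Transcendental ℂ (RatFunc.X⁻¹ : RatFunc ℂ) := by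
    have h0 := RatFunc.transcendental_X (K := ℂ)
    intro h; apply h0
    simpa using h.inv
  exact transcendental_iff_injective.1 h

/-- The substitution `t ↦ 1/t` on rational functions. -/
noncomputable def sig : RatFunc ℂ →+* RatFunc ℂ :=
  RatFunc.liftRingHom (phi : ℂ[X] →+* RatFunc ℂ) (nonZeroDivisors_le_comap_nonZeroDivisors_of_injective _ phi_inj)

lemma sig_am (p : ℂ[X]) : sig (am p) = phi p := RatFunc.liftRingHom_algebraMap _ _ _

lemma sig_X : sig RatFunc.X = RatFunc.X⁻¹ := by
  rw [← RatFunc.algebraMap_X, sig_am]; simp [phi]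

lemma sig_C (a : ℂ) : sig (RatFunc.C a) = RatFunc.C a := by
  rw [← RatFunc.algebraMap_C, sig_am]; simp [phi, RatFunc.algebraMap_eq_C]

lemma rd_sig_am (p : ℂ[X]) : RatFunc.X * rd (sig (am p)) = - sig (RatFunc.X * rd (am p)) := by
  have hX := RatFunc.X_ne_zero (K := ℂ)
  have hi : rd (RatFunc.X⁻¹ : RatFunc ℂ) = - (RatFunc.X⁻¹ * RatFunc.X⁻¹) := by
    have h1 := rd_mul (RatFunc.X : RatFunc ℂ) RatFunc.X⁻¹
    have h2 := rd_C 1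
    rw [map_one] at h2
    rw [mul_inv_cancel₀ hX, h2, rd_X] at h1
    field_simp
    field_simp at h1
    linear_combination -h1
  induction p using Polynomial.induction_on' with
  | add p q hp hq =>
    simp only [map_add, rd_add, map_mul] at hp hq ⊢
    linear_combination hp + hq
  | monomial n a =>
    induction n with
    | zero =>
      rw [monomial_zero_left, RatFunc.algebraMap_C, sig_C, rd_C]; simp
    | succ n ih =>
      have : am (monomial (n + 1) a) = am (monomial n a) * RatFunc.X := by
        rw [← RatFunc.algebraMap_X, ← map_mul, monomial_mul_X]
      rw [this, rd_mul, map_mul sig, rd_mul, sig_X, hi, rd_X]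
      simp only [map_mul, map_add, sig_X, map_one] at ih ⊢
      field_simp at ih ⊢
      linear_combination ih

lemma rd_sig (f : RatFunc ℂ) : RatFunc.X * rd (sig f) = - sig (RatFunc.X * rd f) := by
  obtain ⟨p, q, hq, hf⟩ := exists_rep f
  have h0 := am_ne hq
  have hs : sig (am q) ≠ 0 := (map_ne_zero sig).2 h0
  have h1 : f * am q = am p := by rw [hf]; field_simp
  have h2 := congrArg rd h1
  rw [rd_mul] at h2
  have h3 := congrArg rd (congrArg sig h1)
  rw [map_mul, rd_mul] at h3
  have h4 := congrArg sig h2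
  have e1 := rd_sig_am p
  have e2 := rd_sig_am q
  simp only [map_mul, map_add, sig_X] at h4 e1 e2 ⊢
  apply mul_left_cancel₀ hs
  linear_combination RatFunc.X * h3 + e1 - sig f * e2 + RatFunc.X⁻¹ * h4

lemma VV_zero_eq {t : ℂ} {E : RatFunc ℂ} (h : VV t E 0) : E.num.eval t = 0 := by
  have h1 := h.2
  rw [evR, div_eq_zero_iff] at h1
  exact h1.resolve_right h.1

lemma eq_zero_of_VV {E : RatFunc ℂ} {D : ℂ[X]} (hD : D ≠ 0)
    (h : ∀ t, D.eval t ≠ 0 → VV t E 0) : E = 0 := by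
  have h1 : E.num * D = 0 := by
    apply Polynomial.funext
    intro t
    rw [eval_mul, eval_zero]
    by_cases ht : D.eval t = 0
    · rw [ht, mul_zero]
    · rw [VV_zero_eq (h t ht), zero_mul]
  exact RatFunc.num_eq_zero_iff.1 ((mul_eq_zero.1 h1).resolve_right hD)

lemma VV_X (t : ℂ) : VV t RatFunc.X t := by
  have := VV_am t Polynomial.X
  simpa using this

/-- The Sasano system as identities between rational functions. -/
structure RSol (a0 a1 a3 : ℂ) (q1 p1 q2 p2 : RatFunc ℂ) : Prop where
  e1 : RatFunc.X * rd q1 = 2 * q1 ^ 2 * p1 - q1 ^ 2 + RatFunc.C (a0 + a1 + a3) * q1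
    - RatFunc.X + 4 * RatFunc.X * p2 + 2 * q1 * q2 * p2
  e2 : RatFunc.X * rd p1 = -2 * q1 * p1 ^ 2 + 2 * q1 * p1 - RatFunc.C (a0 + a1 + a3) * p1
    + RatFunc.C a0 - 2 * p1 * q2 * p2
  e3 : RatFunc.X * rd q2 = 2 * q2 ^ 2 * p2 - q2 ^ 2 + RatFunc.C (a0 + a1 + a3) * q2
    - RatFunc.X + 4 * RatFunc.X * p1 + 2 * q1 * p1 * q2
  e4 : RatFunc.X * rd p2 = -2 * q2 * p2 ^ 2 + 2 * q2 * p2 - RatFunc.C (a0 + a1 + a3) * p2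
    + RatFunc.C a1 - 2 * q1 * p1 * p2

open Plc in
lemma rsol {a0 a1 a3 : ℂ} {q1 p1 q2 p2 : RatFunc ℂ} (h : IsSasanoSol a0 a1 a3 q1 p1 q2 p2) :
    RSol a0 a1 a3 q1 p1 q2 p2 := by
  have hD : q1.denom * p1.denom * (q2.denom * p2.denom) ≠ 0 :=
    mul_ne_zero (mul_ne_zero q1.denom_ne_zero p1.denom_ne_zero)
      (mul_ne_zero q2.denom_ne_zero p2.denom_ne_zero)
  have key : ∀ t, (q1.denom * p1.denom * (q2.denom * p2.denom)).eval t ≠ 0 →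
      NoPoleAt q1 t ∧ NoPoleAt p1 t ∧ NoPoleAt q2 t ∧ NoPoleAt p2 t := by
    intro t ht
    simp only [eval_mul, mul_ne_zero_iff] at ht
    exact ⟨ht.1.1, ht.1.2, ht.2.1, ht.2.2⟩
  constructor
  all_goals
    rw [← sub_eq_zero]
    refine eq_zero_of_VV hD fun t ht => ?_
    obtain ⟨n1, n2, n3, n4⟩ := key t ht
    obtain ⟨h1, h2, h3, h4⟩ := h t n1 n2 n3 n4
    have v1 : (pl t).V q1 (evR q1 t) := ⟨n1, rfl⟩
    have v2 : (pl t).V p1 (evR p1 t) := ⟨n2, rfl⟩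
    have v3 : (pl t).V q2 (evR q2 t) := ⟨n3, rfl⟩
    have v4 : (pl t).V p2 (evR p2 t) := ⟨n4, rfl⟩
    have d1 : (pl t).V (rd q1) _ := VV_rd n1
    have d2 : (pl t).V (rd p1) _ := VV_rd n2
    have d3 : (pl t).V (rd q2) _ := VV_rd n3
    have d4 : (pl t).V (rd p2) _ := VV_rd n4
    have vX : (pl t).V RatFunc.X t := VV_X t
    have vs : (pl t).V (RatFunc.C (a0 + a1 + a3)) (a0 + a1 + a3) := (pl t).V_C _
    have va0 : (pl t).V (RatFunc.C a0) a0 := (pl t).V_C _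
    have va1 : (pl t).V (RatFunc.C a1) a1 := (pl t).V_C _
    have v2' : (pl t).V 2 2 := V_two
    have v4' : (pl t).V 4 4 := V_four
    have m := @(pl t).V_mul
    have ad := @(pl t).V_add
  · exact V_congr (V_sub (m vX d1) (ad (ad (V_sub (ad (V_sub (m (m v2' (V_pow v1 2)) v2)
      (V_pow v1 2)) (m vs v1)) vX) (m (m v4' vX) v4)) (m (m (m v2' v1) v3) v4))) rfl
      (by rw [h1]; ring)
  · exact V_congr (V_sub (m vX d2) (V_sub (ad (V_sub (ad (m (m (V_neg v2') v1) (V_pow v2 2))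
      (m (m v2' v1) v2)) (m vs v2)) va0) (m (m (m v2' v2) v3) v4))) rfl
      (by rw [h2]; ring)
  · exact V_congr (V_sub (m vX d3) (ad (ad (V_sub (ad (V_sub (m (m v2' (V_pow v3 2)) v4)
      (V_pow v3 2)) (m vs v3)) vX) (m (m v4' vX) v2)) (m (m (m v2' v1) v2) v3))) rfl
      (by rw [h3]; ring)
  · exact V_congr (V_sub (m vX d4) (V_sub (ad (V_sub (ad (m (m (V_neg v2') v3) (V_pow v4 2))
      (m (m v2' v3) v4)) (m vs v4)) va1) (m (m (m v2' v1) v2) v4))) rfl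
      (by rw [h4]; ring)

lemma rd_ofNat2 : rd (2 : RatFunc ℂ) = 0 := by
  have := rd_C 2
  rwa [map_ofNat] at this
lemma rd_ofNat4 : rd (4 : RatFunc ℂ) = 0 := by
  have := rd_C 4
  rwa [map_ofNat] at this
lemma rd_sub (f g : RatFunc ℂ) : rd (f - g) = rd f - rd g := by
  have := rd_add (f - g) g
  rw [sub_add_cancel] at this
  rw [this]; ring
lemma rd_sq (f : RatFunc ℂ) : rd (f ^ 2) = 2 * f * rd f := by
  rw [sq, rd_mul]; ring

lemma C_quarter : (4 : RatFunc ℂ) * RatFunc.C (1 / 4) = 1 := by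
  have : (4 : RatFunc ℂ) = RatFunc.C 4 := (map_ofNat _ 4).symm
  rw [this, ← map_mul]; norm_num

lemma C_sum (a0 a1 a3 : ℂ) : RatFunc.C (a0 + a1 + a3) =
    RatFunc.C a0 + RatFunc.C a1 + RatFunc.C a3 := by simp

variable {a0 a1 a3 : ℂ} {q1 p1 q2 p2 : RatFunc ℂ}

lemma rd_H (S : RSol a0 a1 a3 q1 p1 q2 p2) :
    RatFunc.X * rd (sasanoH a0 a1 a3 q1 p1 q2 p2) =
      RatFunc.X * ((4 * p1 - 1) * (4 * p2 - 1) - 1) * RatFunc.C (1 / 4) := by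
  obtain ⟨e1, e2, e3, e4⟩ := S
  have hc := C_quarter
  rw [sasanoH]
  simp only [rd_add, rd_sub, rd_mul, rd_sq, rd_C, rd_X, rd_ofNat2, rd_ofNat4]
  generalize RatFunc.C (a0 + a1 + a3) = s at *
  linear_combination (2 * q1 * p1 ^ 2 - 2 * q1 * p1 + s * p1 - RatFunc.C a0 + 2 * p1 * q2 * p2) * e1
    + (2 * q1 ^ 2 * p1 - q1 ^ 2 + s * q1 - RatFunc.X + 4 * RatFunc.X * p2 + 2 * q1 * q2 * p2) * e2
    + (2 * q2 * p2 ^ 2 - 2 * q2 * p2 + s * p2 - RatFunc.C a1 + 2 * p1 * q1 * p2) * e3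
    + (2 * q2 ^ 2 * p2 - q2 ^ 2 + s * q2 - RatFunc.X + 4 * RatFunc.X * p1 + 2 * q1 * q2 * p1) * e4
    - RatFunc.X * (4 * p1 * p2 - p1 - p2) * hc

lemma sol_zero (S : RSol a0 a1 a3 q1 p1 q2 p2) :
    Plc.Sol (pl 0) 1 0 (pl 0).x a0 a1 a3 q1 p1 q2 p2
      (2 * (q1 * p1 + q2 * p2) + RatFunc.C (a0 + a1 + a3)) := by
  obtain ⟨e1, e2, e3, e4⟩ := S
  refine ⟨?_, ?_, ?_, ?_, ?_, Plc.reg1, ⟨_, Plc.V_zero⟩, (pl 0).x_ne⟩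
  all_goals simp only [pl, plc, map_one, map_zero, sub_zero]
  · ring
  · linear_combination e1
  · linear_combination e2
  · linear_combination e3
  · linear_combination e4

lemma sol_inf (S : RSol a0 a1 a3 q1 p1 q2 p2) :
    Plc.Sol (plc 0 (-1) (by simp)) 1 0 (plc 0 (-1) (by simp)).x⁻¹ a0 a1 a3
      (sig q1) (sig p1) (sig q2) (sig p2)
      (2 * (sig q1 * sig p1 + sig q2 * sig p2) + RatFunc.C (a0 + a1 + a3)) := by
  obtain ⟨e1, e2, e3, e4⟩ := S
  refine ⟨?_, ?_, ?_, ?_, ?_, Plc.reg1, ⟨_, Plc.V_zero⟩, inv_ne_zero (Plc.x_ne _)⟩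
  all_goals simp only [plc, map_neg, map_one, map_zero, sub_zero]
  · ring
  · have h1 := rd_sig q1
    rw [e1] at h1
    simp only [map_add, map_sub, map_mul, map_pow, map_neg, map_ofNat, sig_X, sig_C] at h1 ⊢
    linear_combination -h1
  · have h1 := rd_sig p1
    rw [e2] at h1
    simp only [map_add, map_sub, map_mul, map_pow, map_neg, map_ofNat, sig_X, sig_C] at h1 ⊢
    linear_combination -h1
  · have h1 := rd_sig q2
    rw [e3] at h1
    simp only [map_add, map_sub, map_mul, map_pow, map_neg, map_ofNat, sig_X, sig_C] at h1 ⊢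
    linear_combination -h1
  · have h1 := rd_sig p2
    rw [e4] at h1
    simp only [map_add, map_sub, map_mul, map_pow, map_neg, map_ofNat, sig_X, sig_C] at h1 ⊢
    linear_combination -h1

/-- The place at `c` with derivation `t (t - c) d/dt`. -/
noncomputable abbrev plX (c : ℂ) (hc : c ≠ 0) : Plc (RatFunc ℂ) :=
  plc c Polynomial.X (by simpa using hc)

lemma sol_fin (S : RSol a0 a1 a3 q1 p1 q2 p2) (c : ℂ) (hc : c ≠ 0) :
    Plc.Sol (plX c hc) (plX c hc).x (plX c hc).κ ((plX c hc).x ^ 2 * (plX c hc).κ) a0 a1 a3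
      ((plX c hc).x * q1) p1 ((plX c hc).x * q2) p2
      ((plX c hc).x * (2 * (q1 * p1 + q2 * p2) + RatFunc.C (a0 + a1 + a3))) := by
  obtain ⟨e1, e2, e3, e4⟩ := S
  refine ⟨?_, ?_, ?_, ?_, ?_, ⟨_, Plc.V_x _⟩, ⟨_, Plc.V_κ _⟩,
    mul_ne_zero (pow_ne_zero 2 (Plc.x_ne _)) (Plc.V_ne (Plc.V_κ _) (Plc.κ0_ne _))⟩
  all_goals simp only [plX, plc, RatFunc.algebraMap_X, rd_mul, rd_sub, rd_X, rd_C]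
  all_goals generalize hx : RatFunc.X - RatFunc.C c = x
  · ring
  · linear_combination x ^ 2 * e1
  · linear_combination x * e2
  · linear_combination x ^ 2 * e3
  · linear_combination x * e4

lemma pl_V {c : ℂ} {f : RatFunc ℂ} {a : ℂ} : (pl c).V f a ↔ VV c f a := Iff.rfl

lemma VV_C (c a : ℂ) : VV c (RatFunc.C a) a := (pl c).V_C a

lemma VV_sub {c : ℂ} {f g : RatFunc ℂ} {a b : ℂ} (hf : VV c f a) (hg : VV c g b) :
    VV c (f - g) (a - b) := Plc.V_sub (P := pl c) hf hg

lemma VV_congr {c : ℂ} {f g : RatFunc ℂ} {a b : ℂ} (h : VV c f a) (h1 : f = g) (h2 : a = b) :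
    VV c g b := h1 ▸ h2 ▸ h

lemma poly_inf (n : ℕ) : ∀ (p : ℂ[X]) (h : ℂ), p.natDegree ≤ n → VV 0 (sig (am p)) h →
    p = Polynomial.C h := by
  induction n with
  | zero =>
    intro p h hn hp
    have h0 := Polynomial.eq_C_of_natDegree_le_zero hn
    rw [h0, RatFunc.algebraMap_C, sig_C] at hp
    rw [h0, (pl 0).V_uniq hp (VV_C 0 _)]
  | succ n ih =>
    intro p h hn hp
    have hX := RatFunc.X_ne_zero (K := ℂ)
    have hd : p.divX = Polynomial.C 0 := by
      apply ih
      · rw [natDegree_divX_eq_natDegree_tsub_one]; omega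
      · refine VV_congr (VV_mul (VV_X 0) (VV_sub hp (VV_C 0 (p.coeff 0)))) ?_ (by ring)
        have e := congrArg (fun z => sig (am z)) (divX_mul_X_add p)
        simp only [map_add, map_mul, RatFunc.algebraMap_C, RatFunc.algebraMap_X, sig_C, sig_X] at e
        rw [← e]
        field_simp
        ring
    have e := divX_mul_X_add p
    rw [hd, map_zero, zero_mul, zero_add] at e
    rw [← e, RatFunc.algebraMap_C, sig_C] at hp
    rw [← e, (pl 0).V_uniq hp (VV_C 0 _)]

lemma residue_sum (N : ℕ) : ∀ (F : RatFunc ℂ) (h v : ℂ), F.denom.natDegree ≤ N →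
    VV 0 (sig F) h → VV 0 F v →
    (∀ c, c ≠ 0 → ∃ n : ℤ, VV c ((RatFunc.X - RatFunc.C c) * F) (c * n / 4)) →
    ∃ n : ℤ, 4 * (h - v) = n := by
  induction N with
  | zero =>
    intro F h v hN hi hv _
    have h1 : F.denom = 1 := (RatFunc.monic_denom F).natDegree_eq_zero.1 (by omega)
    have h2 : F = am F.num := by
      conv_lhs => rw [← RatFunc.num_div_denom F, h1]
      simp
    rw [h2] at hi hv
    have h3 := poly_inf _ _ h le_rfl hi
    rw [h3, RatFunc.algebraMap_C] at hv
    refine ⟨0, ?_⟩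
    rw [(pl 0).V_uniq hv (VV_C 0 _)]
    simp
  | succ N ih =>
    intro F h v hN hi hv hr
    by_cases hdeg : F.denom.natDegree ≤ N
    · exact ih F h v hdeg hi hv hr
    obtain ⟨c, hc⟩ := IsAlgClosed.exists_root F.denom (by
      intro h0
      have := natDegree_eq_of_degree_eq_some (n := 0) (by simpa using h0)
      omega)
    have hc0 : c ≠ 0 := by
      rintro rfl
      exact hv.1 hc
    obtain ⟨n, hn⟩ := hr c hc0
    have hxc : RatFunc.X - RatFunc.C c ≠ 0 := (pl c).x_ne
    have e1 : (RatFunc.X - RatFunc.C c) *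
        (F - RatFunc.C (c * n / 4) * (RatFunc.X - RatFunc.C c)⁻¹) =
        (RatFunc.X - RatFunc.C c) * F - RatFunc.C (c * n / 4) := by
      field_simp
    have v1 : VV c ((RatFunc.X - RatFunc.C c) *
        (F - RatFunc.C (c * n / 4) * (RatFunc.X - RatFunc.C c)⁻¹)) 0 :=
      VV_congr (VV_sub hn (VV_C c (c * n / 4))) e1.symm (by ring)
    have hreg : NoPoleAt (F - RatFunc.C (c * n / 4) * (RatFunc.X - RatFunc.C c)⁻¹) c := by
      obtain ⟨a, ha⟩ := Plc.Sol.reg_of_x (P := pl c) v1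
      exact ha.1
    have hdvd : (F - RatFunc.C (c * n / 4) * (RatFunc.X - RatFunc.C c)⁻¹).denom ∣ F.denom := by
      obtain ⟨D, hD⟩ := dvd_iff_isRoot.2 hc
      have hD0 : D ≠ 0 := by
        rintro rfl
        exact F.denom_ne_zero (by rw [hD, mul_zero])
      have e2 : F - RatFunc.C (c * n / 4) * (RatFunc.X - RatFunc.C c)⁻¹ =
          am (F.num - Polynomial.C (c * n / 4) * D) / am F.denom := by
        conv_lhs => rw [← RatFunc.num_div_denom F]
        have hd0 := am_ne hD0
        rw [hD]
        simp only [map_sub, map_mul, RatFunc.algebraMap_C, RatFunc.algebraMap_X]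
        field_simp
      rw [e2]
      exact RatFunc.denom_div_dvd _ _
    have hlt : (F - RatFunc.C (c * n / 4) * (RatFunc.X - RatFunc.C c)⁻¹).denom.natDegree ≤ N := by
      by_contra hcon
      have := Polynomial.eq_of_monic_of_dvd_of_natDegree_le (RatFunc.monic_denom _)
        (RatFunc.monic_denom F) hdvd (by omega)
      apply hreg
      rw [← this]
      exact hc
    have vinv : ∀ t, t ≠ c → VV t (RatFunc.X - RatFunc.C c)⁻¹ (t - c)⁻¹ := fun t ht =>
      VV_inv (VV_sub (VV_X t) (VV_C t c)) (sub_ne_zero.2 ht)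
    obtain ⟨m, hm⟩ := ih (F - RatFunc.C (c * n / 4) * (RatFunc.X - RatFunc.C c)⁻¹) h (v + n / 4)
      hlt
      (by
        have hX := RatFunc.X_ne_zero (K := ℂ)
        have w1 : VV 0 (1 - RatFunc.C c * RatFunc.X) 1 :=
          VV_congr (VV_sub (VV_C 0 1) (VV_mul (VV_C 0 c) (VV_X 0))) (by rw [map_one]) (by ring)
        have w2 := VV_mul (VV_C 0 (c * n / 4)) (VV_mul (VV_X 0) (VV_inv w1 one_ne_zero))
        refine VV_congr (VV_sub hi w2) ?_ (by ring)
        rw [map_sub, map_mul, sig_C, map_inv₀, map_sub, sig_C, sig_X]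
        congr 2
        have e3 : (RatFunc.X⁻¹ - RatFunc.C c : RatFunc ℂ) =
            RatFunc.X⁻¹ * (1 - RatFunc.C c * RatFunc.X) := by
          field_simp
        rw [e3, mul_inv, inv_inv])
      (VV_congr (VV_sub hv (VV_mul (VV_C 0 (c * n / 4)) (vinv 0 hc0.symm))) rfl (by
        field_simp
        ring))
      (by
        intro c' hc'
        by_cases hcc : c' = c
        · subst hcc
          exact ⟨0, VV_congr v1 rfl (by simp)⟩
        · obtain ⟨m, hm⟩ := hr c' hc'
          refine ⟨m, VV_congr (VV_sub hm (VV_mul (VV_sub (VV_X c') (VV_C c' c'))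
            (VV_mul (VV_C c' (c * n / 4)) (vinv c' hcc)))) (by ring) (by ring)⟩)
    refine ⟨m + n, ?_⟩
    push_cast
    linear_combination hm

lemma main_aux (S : RSol a0 a1 a3 q1 p1 q2 p2) :
    NoPoleAt (sasanoH a0 a1 a3 q1 p1 q2 p2) 0 ∧
    ∃ n : ℤ,
      4 * ((3 / 4 * (a0 + a1 + a3) ^ 2
        - 1 / 2 * (-2 * a0 + a3) * (-2 * a1 + a3) - 3 * (a0 + a1) * a3)
        - evR (sasanoH a0 a1 a3 q1 p1 q2 p2) 0) = n := by
  have hH := rd_H S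
  -- the point zero
  have z1 : (pl 0).Reg (sasanoH a0 a1 a3 q1 p1 q2 p2) := by
    have r1 := (sol_zero S).at_zero
    have r2 : (pl 0).Reg (((pl 0).x * ((4 * p1 - 1) * (4 * p2 - 1)) - (pl 0).x) *
        (pl 0).C (1 / 4)) := (r1.sub ⟨_, (pl 0).V_x⟩).mul (Plc.regC _)
    refine Plc.reg_H ?_ r2
    simp only [pl, plc, map_one, map_zero, sub_zero]
    linear_combination hH
  obtain ⟨v, hv⟩ := z1
  have hv : VV 0 (sasanoH a0 a1 a3 q1 p1 q2 p2) v := hv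
  refine ⟨hv.1, ?_⟩
  rw [hv.2]
  have hc := C_quarter
  refine residue_sum _ (sasanoH a0 a1 a3 q1 p1 q2 p2 + RatFunc.C (1 / 4) * RatFunc.X) _ v
    le_rfl ?_ ?_ ?_
  · have i1 := (sol_inf S).inf_H
    refine VV_congr i1 ?_ rfl
    rw [sasanoH]
    have hX := RatFunc.X_ne_zero (K := ℂ)
    simp only [plc, map_add, map_sub, map_mul, map_pow, map_ofNat, sig_X, sig_C, map_zero,
      sub_zero]
    linear_combination RatFunc.X⁻¹ * (4 * sig p1 * sig p2 - sig p1 - sig p2) * hc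
  · exact VV_congr (VV_add hv (VV_mul (VV_C 0 (1 / 4)) (VV_X 0))) rfl (by ring)
  · intro c hc0
    obtain ⟨w, hw, hw'⟩ := (sol_fin S c hc0).at_fin
    have r := Plc.res_H (P := plX c hc0) (H := sasanoH a0 a1 a3 q1 p1 q2 p2)
      (G := (4 * p1 - 1) * (4 * p2 - 1)) (by
        simp only [plX, plc, RatFunc.algebraMap_X]
        linear_combination (RatFunc.X - RatFunc.C c) * hH) hw
    have r : VV c ((RatFunc.X - RatFunc.C c) * sasanoH a0 a1 a3 q1 p1 q2 p2) (-w / 4) := r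
    have hk : (plX c hc0).κ0 = c := by simp [plX, plc]
    rw [hk] at hw'
    have hn : ∃ n : ℤ, -w / 4 = c * n / 4 := by
      rcases hw' with rfl | rfl | rfl | rfl
      · exact ⟨0, by simp⟩
      · exact ⟨1, by simp⟩
      · exact ⟨2, by push_cast; ring⟩
      · exact ⟨4, by push_cast; ring⟩
    obtain ⟨n, hn⟩ := hn
    refine ⟨n, VV_congr (VV_add r (VV_mul (VV_sub (VV_X c) (VV_C c c))
      (VV_mul (VV_C c (1 / 4)) (VV_X c)))) (by ring) ?_⟩
    rw [hn]; ring

end SasanoAux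

theorem sasano_hamiltonian_value_difference_integer (a0 a1 a2 a3 : ℂ)
    (hpar : a0 + a1 + 2 * a2 + a3 = 1 / 2)
    (q1 p1 q2 p2 : RatFunc ℂ)
    (hsol : IsSasanoSol a0 a1 a3 q1 p1 q2 p2) :
    NoPoleAt (sasanoH a0 a1 a3 q1 p1 q2 p2) 0 ∧
    ∃ n : ℤ,
      4 * ((3 / 4 * (a0 + a1 + a3) ^ 2
        - 1 / 2 * (-2 * a0 + a3) * (-2 * a1 + a3) - 3 * (a0 + a1) * a3)
        - evR (sasanoH a0 a1 a3 q1 p1 q2 p2) 0) = n := by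
  exact SasanoAux.main_aux (SasanoAux.rsol hsol)
end
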